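/- arXiv:2011.12324 — 2 statements merged into one kernel-verified Lean document; each statement's English description precedes it below -/
import Mathlib

section
/- Let (R, 𝔪, k) be a regular local ring of dimension 3, I = (φ_1, …, φ_n) with pd_R(R/I) = 3 of Tor-algebra class G(r), and F_• a minimal DG-algebra free resolution of R/I in standard form with F_1 ·_F F_1 ⊆ 𝔪² F_2. If moreover d_2(F_2) ⊆ 𝔪² F_1, then for every index set σ = (σ_1 < ⋯ < σ_t), the trimmed ideal tm_σ(I) defines a ring of Tor-algebra class G(r − |σ ∩ [r]|), where [r] = {1, …, r}. -/
open IsLocalRing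

section TorAlgebraClasses

open IsLocalRing

variable (R : Type) [CommRing R] [IsLocalRing R]

/-- The trimming operation on ideals: for `I = (φ 0, …, φ (n-1))` and an index set
`σ`, `tm_σ(I) = (φ i : i ∉ σ) + 𝔪·(φ j : j ∈ σ)`. -/
def trimIdeal {n : ℕ} (φ : Fin n → R) (σ : Finset (Fin n)) : Ideal R :=
  Ideal.span (φ '' {i | i ∉ σ}) ⊔ maximalIdeal R * Ideal.span (φ '' {i | i ∈ σ})

/-- `R/J` has projective dimension `3` and Tor-algebra class `G(r)`
(Avramov–Kustin–Miller normal form): encoded by the existence of a minimal free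
resolution `0 → R^{n3} → R^{n2} → R^{n1} → R` of `R/J` carrying an associative
DG-algebra structure whose induced multiplication on `Tor^R_•(R/J, k) = F̄_•`
is, with respect to the standard bases, in the `G(r)` normal form:
`f̄₁ⁱ f̄₂ⁱ = f̄₃¹` for `1 ≤ i ≤ r` and all other products of basis elements vanish. -/
def HasTorClassG (J : Ideal R) (r : ℕ) : Prop :=
  ∃ (n1 n2 n3 : ℕ) (h3 : 0 < n3), r ≤ n1 ∧ r ≤ n2 ∧
  ∃ (d1 : (Fin n1 → R) →ₗ[R] R) (d2 : (Fin n2 → R) →ₗ[R] (Fin n1 → R))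
    (d3 : (Fin n3 → R) →ₗ[R] (Fin n2 → R))
    (m11 : (Fin n1 → R) →ₗ[R] (Fin n1 → R) →ₗ[R] (Fin n2 → R))
    (m12 : (Fin n1 → R) →ₗ[R] (Fin n2 → R) →ₗ[R] (Fin n3 → R)),
    -- minimal free resolution of R/J
    LinearMap.range d1 = J ∧
    LinearMap.ker d1 = LinearMap.range d2 ∧
    LinearMap.ker d2 = LinearMap.range d3 ∧
    LinearMap.ker d3 = ⊥ ∧
    (∀ v, d1 v ∈ maximalIdeal R) ∧
    (∀ v, d2 v ∈ maximalIdeal R • (⊤ : Submodule R (Fin n1 → R))) ∧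
    (∀ v, d3 v ∈ maximalIdeal R • (⊤ : Submodule R (Fin n2 → R))) ∧
    -- DG-algebra axioms
    (∀ a b, d2 (m11 a b) = d1 a • b - d1 b • a) ∧
    (∀ a, m11 a a = 0) ∧ (∀ a b, m11 a b = - m11 b a) ∧
    (∀ a z, d3 (m12 a z) = d1 a • z - m11 a (d2 z)) ∧
    (∀ a b c, m12 c (m11 a b) = m12 a (m11 b c)) ∧
    -- G(r) normal form for the induced products on `F ⊗ k`
    (∀ a b : Fin n1, m11 (Pi.single a 1) (Pi.single b 1) ∈
      maximalIdeal R • (⊤ : Submodule R (Fin n2 → R))) ∧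
    (∀ (a : Fin n1) (b : Fin n2),
      m12 (Pi.single a 1) (Pi.single b 1) -
        (if (a : ℕ) = (b : ℕ) ∧ (a : ℕ) < r then Pi.single (⟨0, h3⟩ : Fin n3) 1 else 0) ∈
      maximalIdeal R • (⊤ : Submodule R (Fin n3 → R)))

/-- `R/J` has projective dimension `3` and Tor-algebra class `H(p,q)`:
`f̄₁^{p+1} f̄₁ⁱ = f̄₂ⁱ` for `1 ≤ i ≤ p`, `f̄₁^{p+1} f̄₂^{p+i} = f̄₃ⁱ` for `1 ≤ i ≤ q`,
and all other products of basis elements vanish (0-based indices below). -/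
def HasTorClassH (J : Ideal R) (p q : ℕ) : Prop :=
  ∃ (n1 n2 n3 : ℕ) (hp : p < n1) (hpq : p + q ≤ n2) (hq3 : q ≤ n3),
  ∃ (d1 : (Fin n1 → R) →ₗ[R] R) (d2 : (Fin n2 → R) →ₗ[R] (Fin n1 → R))
    (d3 : (Fin n3 → R) →ₗ[R] (Fin n2 → R))
    (m11 : (Fin n1 → R) →ₗ[R] (Fin n1 → R) →ₗ[R] (Fin n2 → R))
    (m12 : (Fin n1 → R) →ₗ[R] (Fin n2 → R) →ₗ[R] (Fin n3 → R)),
    LinearMap.range d1 = J ∧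
    LinearMap.ker d1 = LinearMap.range d2 ∧
    LinearMap.ker d2 = LinearMap.range d3 ∧
    LinearMap.ker d3 = ⊥ ∧
    (∀ v, d1 v ∈ maximalIdeal R) ∧
    (∀ v, d2 v ∈ maximalIdeal R • (⊤ : Submodule R (Fin n1 → R))) ∧
    (∀ v, d3 v ∈ maximalIdeal R • (⊤ : Submodule R (Fin n2 → R))) ∧
    (∀ a b, d2 (m11 a b) = d1 a • b - d1 b • a) ∧
    (∀ a, m11 a a = 0) ∧ (∀ a b, m11 a b = - m11 b a) ∧
    (∀ a z, d3 (m12 a z) = d1 a • z - m11 a (d2 z)) ∧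
    (∀ a b c, m12 c (m11 a b) = m12 a (m11 b c)) ∧
    -- H(p,q) normal form for the induced products on `F ⊗ k`
    (∀ b : Fin n1, ∀ hb : (b : ℕ) < p,
      m11 (Pi.single (⟨p, hp⟩ : Fin n1) 1) (Pi.single b 1) -
        Pi.single (⟨(b : ℕ), by omega⟩ : Fin n2) 1 ∈
      maximalIdeal R • (⊤ : Submodule R (Fin n2 → R))) ∧
    (∀ a b : Fin n1, ¬((a : ℕ) = p ∧ (b : ℕ) < p) → ¬((b : ℕ) = p ∧ (a : ℕ) < p) →
      m11 (Pi.single a 1) (Pi.single b 1) ∈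
        maximalIdeal R • (⊤ : Submodule R (Fin n2 → R))) ∧
    (∀ b : Fin n2, ∀ hb1 : p ≤ (b : ℕ), ∀ hb2 : (b : ℕ) < p + q,
      m12 (Pi.single (⟨p, hp⟩ : Fin n1) 1) (Pi.single b 1) -
        Pi.single (⟨(b : ℕ) - p, by omega⟩ : Fin n3) 1 ∈
      maximalIdeal R • (⊤ : Submodule R (Fin n3 → R))) ∧
    (∀ (a : Fin n1) (b : Fin n2), ¬((a : ℕ) = p ∧ p ≤ (b : ℕ) ∧ (b : ℕ) < p + q) →
      m12 (Pi.single a 1) (Pi.single b 1) ∈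
        maximalIdeal R • (⊤ : Submodule R (Fin n3 → R)))

/-- `R/J` is a Golod ring: in the grade-3 setting of the paper this is equivalent
(Avramov–Kustin–Miller) to the multiplication on `Tor_+^R(R/J,k)` being trivial,
which is how it is encoded here: some minimal free resolution of `R/J` of length `≤ 3`
carries a DG-algebra structure all of whose products lie in `𝔪 • F`. -/
def IsGolodQuotient (J : Ideal R) : Prop :=
  ∃ (n1 n2 n3 : ℕ)
    (d1 : (Fin n1 → R) →ₗ[R] R) (d2 : (Fin n2 → R) →ₗ[R] (Fin n1 → R))
    (d3 : (Fin n3 → R) →ₗ[R] (Fin n2 → R))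
    (m11 : (Fin n1 → R) →ₗ[R] (Fin n1 → R) →ₗ[R] (Fin n2 → R))
    (m12 : (Fin n1 → R) →ₗ[R] (Fin n2 → R) →ₗ[R] (Fin n3 → R)),
    LinearMap.range d1 = J ∧
    LinearMap.ker d1 = LinearMap.range d2 ∧
    LinearMap.ker d2 = LinearMap.range d3 ∧
    LinearMap.ker d3 = ⊥ ∧
    (∀ v, d1 v ∈ maximalIdeal R) ∧
    (∀ v, d2 v ∈ maximalIdeal R • (⊤ : Submodule R (Fin n1 → R))) ∧
    (∀ v, d3 v ∈ maximalIdeal R • (⊤ : Submodule R (Fin n2 → R))) ∧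
    (∀ a b, d2 (m11 a b) = d1 a • b - d1 b • a) ∧
    (∀ a, m11 a a = 0) ∧ (∀ a b, m11 a b = - m11 b a) ∧
    (∀ a z, d3 (m12 a z) = d1 a • z - m11 a (d2 z)) ∧
    (∀ a b c, m12 c (m11 a b) = m12 a (m11 b c)) ∧
    -- trivial Tor multiplication
    (∀ a b, m11 a b ∈ maximalIdeal R • (⊤ : Submodule R (Fin n2 → R))) ∧
    (∀ a z, m12 a z ∈ maximalIdeal R • (⊤ : Submodule R (Fin n3 → R)))

end TorAlgebraClasses

/-!
Split `F₁ = A ⊕ B`, with `B` spanned by the basis elements indexed by `σ`, and let `K` be a direct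
sum of Koszul complexes on `x`, one for each of these, so that `K` resolves `B / 𝔪 B`. The trimmed
ideal is resolved by `F ⊕ K` with `F₁` replaced by `A ⊕ K₁`: the `B`-component of `d₂` lifts
through `K₁ → B` to `q₁`, which has entries in `𝔪` because `d₂` has entries in `𝔪²`, and `q₁`
lifts further to `q₂ : F₃ → K₂`. The Koszul differentials are linear, so whatever they send into
`𝔪²` lies in `𝔪`; this makes the new resolution minimal and the new components of the products
vanish modulo `𝔪`. Since `K₁` maps into `𝔪 B`, products with `K₁` vanish modulo `𝔪`, and exactly
the relations `f̄₁ⁱ f̄₂ⁱ = f̄₃¹` with `i ∉ σ` survive.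

The one obstruction is that `q₂` need not vanish modulo `𝔪²`, so `f₁ⁱ f₂ⁱ` could pick up a nonzero
component in `K₃`. Such a product exhibits `f₃¹` modulo `𝔪 F₃`, and the Leibniz rule then provides
a lift of `q₁ (d₃ f₃¹)` in `𝔪² K₂`, by which `q₂ f₃¹` can be replaced.
-/

namespace TorAlgebra

section SmulTop

variable {R M N P : Type*} [CommRing R] [AddCommGroup M] [Module R M] [AddCommGroup N] [Module R N]
  [AddCommGroup P] [Module R P] {I : Ideal R}

theorem map_mem_smul_top (f : M →ₗ[R] N) {v : M} (hv : v ∈ I • (⊤ : Submodule R M)) :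
    f v ∈ I • (⊤ : Submodule R N) :=
  Submodule.smul_top_le_comap_smul_top I f hv

theorem map_mem_sq_smul_top {f : M →ₗ[R] N} (hf : ∀ v, f v ∈ I • (⊤ : Submodule R N)) {v : M}
    (hv : v ∈ I • (⊤ : Submodule R M)) : f v ∈ I ^ 2 • (⊤ : Submodule R N) := by
  have hmap : Submodule.map f (I • ⊤) ≤ I • I • (⊤ : Submodule R N) := by
    rw [Submodule.map_smul'']
    exact Submodule.smul_mono le_rfl (Submodule.map_le_iff_le_comap.2 fun w _ => hf w)
  rw [pow_two, Submodule.mul_smul]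
  exact hmap (Submodule.mem_map_of_mem hv)

theorem mk_mem_smul_top {v : M} {w : N} (hv : v ∈ I • (⊤ : Submodule R M))
    (hw : w ∈ I • (⊤ : Submodule R N)) : (v, w) ∈ I • (⊤ : Submodule R (M × N)) := by
  simpa using add_mem (map_mem_smul_top (LinearMap.inl R M N) hv)
    (map_mem_smul_top (LinearMap.inr R M N) hw)

theorem mem_smul_top_pi_iff {ι : Type*} [Finite ι] {M : ι → Type*} [∀ i, AddCommGroup (M i)]
    [∀ i, Module R (M i)] {v : ∀ i, M i} :
    v ∈ I • (⊤ : Submodule R (∀ i, M i)) ↔ ∀ i, v i ∈ I • (⊤ : Submodule R (M i)) := by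
  classical
  have := Fintype.ofFinite ι
  refine ⟨fun hv i => map_mem_smul_top (LinearMap.proj i) hv, fun hv => ?_⟩
  rw [← Finset.univ_sum_single v]
  exact sum_mem fun i _ => map_mem_smul_top (LinearMap.single R M i) (hv i)

theorem smul_top_eq_pi {ι : Type*} [Finite ι] :
    I • (⊤ : Submodule R (ι → M)) = Submodule.pi Set.univ fun _ => I • (⊤ : Submodule R M) := by
  ext v
  simp [mem_smul_top_pi_iff]

theorem bilin_mem_of_basis {ι κ : Type*} (b : Module.Basis ι R M) (c : Module.Basis κ R N)
    {f : M →ₗ[R] N →ₗ[R] P} {Q : Submodule R P} (h : ∀ i j, f (b i) (c j) ∈ Q) (v : M) (w : N) :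
    f v w ∈ Q :=
  LinearMap.BilinMap.apply_apply_mem_of_mem_span Q (Set.range b) (Set.range c) f
    (Set.forall_mem_range.2 fun i => Set.forall_mem_range.2 (h i)) v w
    (b.mem_span v) (c.mem_span w)

end SmulTop

section Lifting

variable {R F F' M N : Type*} [CommRing R] [AddCommGroup F] [Module R F] [AddCommGroup F']
  [Module R F'] [AddCommGroup M] [Module R M] [AddCommGroup N] [Module R N] {g : M →ₗ[R] N}

theorem exists_lift_mem [Module.Projective R F] (f : F →ₗ[R] N) (P : Submodule R M)
    (h : ∀ z, ∃ u ∈ P, g u = f z) : ∃ l : F →ₗ[R] M, (∀ z, g (l z) = f z) ∧ ∀ z, l z ∈ P := by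
  have hf (z : F) : f z ∈ LinearMap.range (g.domRestrict P) := by
    obtain ⟨u, hu, hgu⟩ := h z
    exact ⟨⟨u, hu⟩, hgu⟩
  obtain ⟨l, hl⟩ := Module.projective_lifting_property (g.domRestrict P).rangeRestrict
    (f.codRestrict _ hf) (LinearMap.surjective_rangeRestrict _)
  exact ⟨P.subtype ∘ₗ l, fun z => congrArg Subtype.val (LinearMap.congr_fun hl z),
    fun z => (l z).2⟩

theorem exists_bilin_lift_of_injective (hg : Function.Injective g) (f : F →ₗ[R] F' →ₗ[R] N)
    (h : ∀ z w, f z w ∈ LinearMap.range g) :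
    ∃ l : F →ₗ[R] F' →ₗ[R] M, ∀ z w, g (l z w) = f z w := by
  choose l hl using h
  refine ⟨LinearMap.mk₂ R l ?_ ?_ ?_ ?_, hl⟩ <;> intros <;> apply hg <;> simp [hl]

theorem exists_alternating_lift_mem [Module.Free R F] {c : F →ₗ[R] F →ₗ[R] N}
    (hc : c.IsAlt) (P : Submodule R M) (h : ∀ z w, ∃ u ∈ P, g u = c z w) :
    ∃ l : F →ₗ[R] F →ₗ[R] M, l.IsAlt ∧ (∀ z w, g (l z w) = c z w) ∧ ∀ z w, l z w ∈ P := by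
  classical
  let b := Module.Free.chooseBasis R F
  let := linearOrderOfSTO (WellOrderingRel (α := Module.Free.ChooseBasisIndex R F))
  choose u huP hgu using h
  let β : F →ₗ[R] F →ₗ[R] M := b.constr R fun i => b.constr R fun j =>
    if i < j then u (b i) (b j) else 0
  have hβ (i j) : β (b i) (b j) = if i < j then u (b i) (b j) else 0 := by
    simp [β, Module.Basis.constr_basis]
  have hlift : (β - β.flip).compr₂ g = c := by
    refine LinearMap.ext_basis b b fun i j => ?_
    rcases lt_trichotomy i j with hij | rfl | hij
    · simp [hβ, hij, hij.not_gt, hgu]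
    · simp [hc (b i)]
    · simp [hβ, hij, hij.not_gt, hgu, hc.neg]
  refine ⟨β - β.flip, fun z => by simp, fun z w => LinearMap.congr_fun₂ hlift z w,
    bilin_mem_of_basis b b fun i j => sub_mem ?_ ?_⟩
  all_goals
    simp only [LinearMap.flip_apply, hβ]
    split_ifs
    exacts [huP _ _, zero_mem P]

end Lifting

section Koszul

variable {R : Type*} [CommRing R]

theorem mem_ofList_of_isWeaklyRegular {rs : List R} (h : RingTheory.Sequence.IsWeaklyRegular R rs)
    {i : ℕ} (hi : i < rs.length) {c : R} (hc : rs[i] * c ∈ Ideal.ofList (rs.take i)) :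
    c ∈ Ideal.ofList (rs.take i) := by
  have hmem := (isSMulRegular_quotient_iff_mem_of_smul_mem _ _).1 (h.regular_mod_prev i hi) c
  rw [smul_eq_mul, Ideal.mul_top] at hmem
  exact hmem hc

theorem syzygies_of_isWeaklyRegular {x y z : R}
    (h : RingTheory.Sequence.IsWeaklyRegular R [x, y, z]) :
    (∀ c, x * c = 0 → c = 0) ∧ (∀ c d, y * c = d * x → ∃ e, e * x = c) ∧
      ∀ c d e, z * c = d * x + e * y → ∃ p q, p * x + q * y = c := by
  have hzero : Ideal.ofList ([] : List R) = ⊥ := Ideal.ofList_nil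
  have hone : Ideal.ofList [x] = Ideal.span {x} := Ideal.ofList_singleton x
  have htwo : Ideal.ofList [x, y] = Ideal.span {x, y} := by
    rw [Ideal.ofList_cons, Ideal.ofList_singleton, Ideal.span_insert]
  refine ⟨fun c hc => ?_, fun c d hc => ?_, fun c d e hc => ?_⟩
  · have hmem : c ∈ Ideal.ofList [] := mem_ofList_of_isWeaklyRegular h (i := 0) (by simp)
      (by simpa using hc)
    rwa [hzero] at hmem
  · have hmem : c ∈ Ideal.ofList [x] := mem_ofList_of_isWeaklyRegular h (i := 1) (by simp) (by
      change y * c ∈ Ideal.ofList [x]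
      rw [hone]
      exact Ideal.mem_span_singleton'.2 ⟨d, hc.symm⟩)
    rw [hone] at hmem
    exact Ideal.mem_span_singleton'.1 hmem
  · have hmem : c ∈ Ideal.ofList [x, y] := mem_ofList_of_isWeaklyRegular h (i := 2) (by simp) (by
      change z * c ∈ Ideal.ofList [x, y]
      rw [htwo]
      exact Ideal.mem_span_pair.2 ⟨d, e, hc.symm⟩)
    rw [htwo] at hmem
    exact Ideal.mem_span_pair.1 hmem

theorem linearCombination_fin_three (x c : Fin 3 → R) :
    Fintype.linearCombination R x c = c 0 * x 0 + c 1 * x 1 + c 2 * x 2 := by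
  simp [Fintype.linearCombination_apply, Fin.sum_univ_three]

variable {x : Fin 3 → R}

theorem exact_crossProduct_linearCombination
    (h : RingTheory.Sequence.IsWeaklyRegular R [x 0, x 1, x 2]) :
    Function.Exact (crossProduct x) (Fintype.linearCombination R x) := by
  obtain ⟨h0, h1, h2⟩ := syzygies_of_isWeaklyRegular h
  refine fun u => ⟨fun hu => ?_, ?_⟩
  · rw [linearCombination_fin_three] at hu
    obtain ⟨p, q, hpq⟩ := h2 (u 2) (-u 0) (-u 1) (by linear_combination hu)
    obtain ⟨w, hw⟩ := h1 (u 1 + x 2 * q) (-(u 0 + x 2 * p)) (by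
      rw [← hpq] at hu
      linear_combination hu)
    have hzero := h0 (u 0 + x 2 * p + x 1 * w) (by
      rw [← hpq] at hu
      linear_combination hu + x 1 * hw)
    refine ⟨![-q, p, -w], ?_⟩
    ext j
    rw [cross_apply]
    fin_cases j
    · change x 1 * -w - x 2 * p = u 0
      linear_combination -hzero
    · change x 2 * -q - x 0 * -w = u 1
      linear_combination hw
    · change x 0 * p - x 1 * -q = u 2
      linear_combination hpq
  · rintro ⟨y, rfl⟩
    rw [linearCombination_fin_three, cross_apply]
    change (x 1 * y 2 - x 2 * y 1) * x 0 + (x 2 * y 0 - x 0 * y 2) * x 1 +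
      (x 0 * y 1 - x 1 * y 0) * x 2 = 0
    ring

theorem exact_toSpanSingleton_crossProduct
    (h : RingTheory.Sequence.IsWeaklyRegular R [x 0, x 1, x 2]) :
    Function.Exact (LinearMap.toSpanSingleton R (Fin 3 → R) x) (crossProduct x) := by
  obtain ⟨h0, h1, -⟩ := syzygies_of_isWeaklyRegular h
  refine fun u => ⟨fun hu => ?_, ?_⟩
  · rw [cross_apply] at hu
    have hu1 : x 2 * u 0 - x 0 * u 2 = 0 := congrFun hu 1
    have hu2 : x 0 * u 1 - x 1 * u 0 = 0 := congrFun hu 2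
    obtain ⟨c, hc⟩ := h1 (u 0) (u 1) (by linear_combination -hu2)
    have hc1 := h0 (u 1 - c * x 1) (by linear_combination hu2 - x 1 * hc)
    have hc2 := h0 (u 2 - c * x 2) (by linear_combination -hu1 - x 2 * hc)
    refine ⟨c, ?_⟩
    ext j
    fin_cases j
    exacts [hc, (sub_eq_zero.1 hc1).symm, (sub_eq_zero.1 hc2).symm]
  · rintro ⟨c, rfl⟩
    simp [LinearMap.toSpanSingleton_apply, cross_self]

theorem toSpanSingleton_injective_of_isWeaklyRegular
    (h : RingTheory.Sequence.IsWeaklyRegular R [x 0, x 1, x 2]) :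
    Function.Injective (LinearMap.toSpanSingleton R (Fin 3 → R) x) := by
  refine (injective_iff_map_eq_zero _).2 fun c hc => (syzygies_of_isWeaklyRegular h).1 c ?_
  rw [mul_comm]
  exact congrFun hc 0

variable {I : Ideal R}

theorem crossProduct_mem (hx : ∀ j, x j ∈ I) (u : Fin 3 → R) :
    crossProduct x u ∈ I • (⊤ : Submodule R (Fin 3 → R)) := by
  have hmul (i j : Fin 3) : x i * u j ∈ I := Ideal.mul_mem_right _ _ (hx i)
  simp only [mem_smul_top_pi_iff, smul_eq_mul, Ideal.mul_top, cross_apply]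
  intro j
  fin_cases j
  exacts [sub_mem (hmul 1 2) (hmul 2 1), sub_mem (hmul 2 0) (hmul 0 2),
    sub_mem (hmul 0 1) (hmul 1 0)]

theorem exists_linearCombination_eq_of_mem_sq (hx : Ideal.span (Set.range x) = I) {a : R}
    (ha : a ∈ I ^ 2) :
    ∃ u ∈ I • (⊤ : Submodule R (Fin 3 → R)), Fintype.linearCombination R x u = a := by
  have hmap : Submodule.map (Fintype.linearCombination R x) (I • ⊤) = I ^ 2 := by
    rw [Submodule.map_smul'', Submodule.map_top, Fintype.range_linearCombination, pow_two]
    exact congrArg (I * ·) hx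
  rwa [← hmap] at ha

theorem mem_of_linearCombination_mem_sq
    (h : RingTheory.Sequence.IsWeaklyRegular R [x 0, x 1, x 2])
    (hx : Ideal.span (Set.range x) = I) {c : Fin 3 → R}
    (hc : Fintype.linearCombination R x c ∈ I ^ 2) (j : Fin 3) : c j ∈ I := by
  obtain ⟨u, hu, huc⟩ := exists_linearCombination_eq_of_mem_sq hx hc
  obtain ⟨y, hy⟩ := (exact_crossProduct_linearCombination h (c - u)).1
    (by rw [map_sub, huc, sub_self])
  have hmem := add_mem
    (crossProduct_mem (fun j => hx ▸ Ideal.subset_span (Set.mem_range_self j)) y) hu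
  rw [hy, sub_add_cancel] at hmem
  simpa using mem_smul_top_pi_iff.1 hmem j

/-- A free resolution `0 → K₃ → K₂ → K₁ → B` of `B / I B` with differentials linear in the minimal
generators of `I`, such as the Koszul complex. Linearity is encoded as minimality (`k₂_mem`,
`k₃_mem`) together with injectivity of the maps induced by `k₂` and `k₃` from `K / I K` to
`I K / I² K` (`mem_of_k₂_mem`, `mem_of_k₃_mem`); freeness is assumed where it is used. -/
structure LinearResolution (I : Ideal R) (B K₁ K₂ K₃ : Type*)
    [AddCommGroup B] [Module R B] [AddCommGroup K₁] [Module R K₁]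
    [AddCommGroup K₂] [Module R K₂] [AddCommGroup K₃] [Module R K₃] where
  k₁ : K₁ →ₗ[R] B
  k₂ : K₂ →ₗ[R] K₁
  k₃ : K₃ →ₗ[R] K₂
  range_k₁ : LinearMap.range k₁ = I • ⊤
  exact₁ : Function.Exact k₂ k₁
  exact₂ : Function.Exact k₃ k₂
  injective : Function.Injective k₃
  k₂_mem : ∀ u, k₂ u ∈ I • (⊤ : Submodule R K₁)
  k₃_mem : ∀ t, k₃ t ∈ I • (⊤ : Submodule R K₂)
  mem_of_k₂_mem : ∀ {u}, k₂ u ∈ I ^ 2 • (⊤ : Submodule R K₁) → u ∈ I • (⊤ : Submodule R K₂)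
  mem_of_k₃_mem : ∀ {t}, k₃ t ∈ I ^ 2 • (⊤ : Submodule R K₂) → t ∈ I • (⊤ : Submodule R K₃)

namespace LinearResolution

/-- The Koszul complex on a weakly regular sequence of length three. Exterior powers are written in
coordinates, which turns the middle differential into the cross product with `x`. -/
def koszul (h : RingTheory.Sequence.IsWeaklyRegular R [x 0, x 1, x 2])
    (hx : Ideal.span (Set.range x) = I) :
    LinearResolution I R (Fin 3 → R) (Fin 3 → R) R where
  k₁ := Fintype.linearCombination R x
  k₂ := crossProduct x
  k₃ := LinearMap.toSpanSingleton R (Fin 3 → R) x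
  range_k₁ := by
    rw [Fintype.range_linearCombination, smul_eq_mul, Ideal.mul_top]
    exact hx
  exact₁ := exact_crossProduct_linearCombination h
  exact₂ := exact_toSpanSingleton_crossProduct h
  injective := toSpanSingleton_injective_of_isWeaklyRegular h
  k₂_mem := crossProduct_mem fun j => hx ▸ Ideal.subset_span (Set.mem_range_self j)
  k₃_mem t := mem_smul_top_pi_iff.2 fun j => Submodule.smul_mem _ t <| by
    rw [smul_eq_mul, Ideal.mul_top]
    exact hx ▸ Ideal.subset_span (Set.mem_range_self j)
  mem_of_k₂_mem {u} hu := by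
    have hcomp := mem_smul_top_pi_iff.1 hu
    simp only [cross_apply, smul_eq_mul, Ideal.mul_top] at hcomp
    have hfst (j) : ![0, u 2, -u 1] j ∈ I := mem_of_linearCombination_mem_sq h hx (by
      rw [linearCombination_fin_three]
      convert hcomp 0 using 1
      change 0 * x 0 + u 2 * x 1 + -u 1 * x 2 = x 1 * u 2 - x 2 * u 1
      ring) j
    have hsnd (j) : ![-u 2, 0, u 0] j ∈ I := mem_of_linearCombination_mem_sq h hx (by
      rw [linearCombination_fin_three]
      convert hcomp 1 using 1
      change -u 2 * x 0 + 0 * x 1 + u 0 * x 2 = x 2 * u 0 - x 0 * u 2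
      ring) j
    rw [mem_smul_top_pi_iff, smul_eq_mul, Ideal.mul_top]
    intro j
    fin_cases j
    exacts [hsnd 2, neg_mem_iff.1 (hfst 2), hfst 1]
  mem_of_k₃_mem {t} ht := by
    have ht0 : t * x 0 ∈ I ^ 2 • (⊤ : Ideal R) := mem_smul_top_pi_iff.1 ht 0
    rw [smul_eq_mul, Ideal.mul_top] at ht0 ⊢
    exact mem_of_linearCombination_mem_sq h hx (c := ![t, 0, 0])
      (by simpa [linearCombination_fin_three] using ht0) 0

variable {B K₁ K₂ K₃ : Type*} [AddCommGroup B] [Module R B] [AddCommGroup K₁] [Module R K₁]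
  [AddCommGroup K₂] [Module R K₂] [AddCommGroup K₃] [Module R K₃]

/-- The direct sum of copies of a linear resolution indexed by a finite type `S`: the Koszul
complex is taken once for each trimmed generator. -/
def pi (K : LinearResolution I B K₁ K₂ K₃) (S : Type*) [Finite S] :
    LinearResolution I (S → B) (S → K₁) (S → K₂) (S → K₃) where
  k₁ := K.k₁.compLeft S
  k₂ := K.k₂.compLeft S
  k₃ := K.k₃.compLeft S
  range_k₁ := by rw [LinearMap.range_compLeft, K.range_k₁, smul_top_eq_pi]
  exact₁ := LinearMap.exact_iff.2 (by
    rw [LinearMap.ker_compLeft, LinearMap.range_compLeft, K.exact₁.linearMap_ker_eq])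
  exact₂ := LinearMap.exact_iff.2 (by
    rw [LinearMap.ker_compLeft, LinearMap.range_compLeft, K.exact₂.linearMap_ker_eq])
  injective := K.injective.comp_left
  k₂_mem u := mem_smul_top_pi_iff.2 fun s => K.k₂_mem (u s)
  k₃_mem t := mem_smul_top_pi_iff.2 fun s => K.k₃_mem (t s)
  mem_of_k₂_mem hu := mem_smul_top_pi_iff.2 fun s => K.mem_of_k₂_mem (mem_smul_top_pi_iff.1 hu s)
  mem_of_k₃_mem ht := mem_smul_top_pi_iff.2 fun s => K.mem_of_k₃_mem (mem_smul_top_pi_iff.1 ht s)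

variable (K : LinearResolution I B K₁ K₂ K₃)

theorem k₁_mem (u : K₁) : K.k₁ u ∈ I • (⊤ : Submodule R B) :=
  K.range_k₁ ▸ LinearMap.mem_range_self K.k₁ u

theorem k₁_k₂ (u : K₂) : K.k₁ (K.k₂ u) = 0 := K.exact₁.apply_apply_eq_zero u

theorem k₂_k₃ (t : K₃) : K.k₂ (K.k₃ t) = 0 := K.exact₂.apply_apply_eq_zero t

theorem map_k₁ : Submodule.map K.k₁ (I • ⊤) = I ^ 2 • (⊤ : Submodule R B) := by
  rw [Submodule.map_smul'', Submodule.map_top, K.range_k₁, pow_two, Submodule.mul_smul]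

variable (A : Type*) [AddCommGroup A] [Module R A]

/-- The degree one part of the comparison map from the trimmed resolution to the original one: a
new generator `u : K₁` stands for the element `k₁ u` of `I B`. -/
def proj : A × K₁ →ₗ[R] A × B := LinearMap.id.prodMap K.k₁

variable {A}

theorem proj_apply (g : A × K₁) : K.proj A g = (g.1, K.k₁ g.2) := rfl

theorem proj_eq_add (g : A × K₁) : K.proj A g = (g.1, 0) + (0, K.k₁ g.2) := by
  simp [proj_apply]

theorem inr_k₁_mem (u : K₁) : ((0 : A), K.k₁ u) ∈ I • (⊤ : Submodule R (A × B)) :=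
  mk_mem_smul_top (zero_mem _) (K.k₁_mem u)

end LinearResolution

end Koszul

section DGResolution

/-- A resolution `0 → F₃ → F₂ → F₁ → R` of the cyclic module `R / range d₁` with a differential
graded algebra structure, of which only the products `F₁ × F₁ → F₂` and `F₁ × F₂ → F₃` need
recording. Associativity is a consequence, see `DGResolution.m₁₂_m₁₁`. -/
structure DGResolution (R F₁ F₂ F₃ : Type*) [CommRing R] [AddCommGroup F₁] [Module R F₁]
    [AddCommGroup F₂] [Module R F₂] [AddCommGroup F₃] [Module R F₃] where
  d₁ : F₁ →ₗ[R] R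
  d₂ : F₂ →ₗ[R] F₁
  d₃ : F₃ →ₗ[R] F₂
  m₁₁ : F₁ →ₗ[R] F₁ →ₗ[R] F₂
  m₁₂ : F₁ →ₗ[R] F₂ →ₗ[R] F₃
  exact₁ : Function.Exact d₂ d₁
  exact₂ : Function.Exact d₃ d₂
  injective : Function.Injective d₃
  isAlt : m₁₁.IsAlt
  d₂_m₁₁ : ∀ a b, d₂ (m₁₁ a b) = d₁ a • b - d₁ b • a
  d₃_m₁₂ : ∀ a z, d₃ (m₁₂ a z) = d₁ a • z - m₁₁ a (d₂ z)

namespace DGResolution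

variable {R F₁ F₂ F₃ : Type*} [CommRing R] [AddCommGroup F₁] [Module R F₁]
  [AddCommGroup F₂] [Module R F₂] [AddCommGroup F₃] [Module R F₃]

section Basic

variable (F : DGResolution R F₁ F₂ F₃)

theorem d₁_d₂ (z : F₂) : F.d₁ (F.d₂ z) = 0 := F.exact₁.apply_apply_eq_zero z

theorem d₂_d₃ (w : F₃) : F.d₂ (F.d₃ w) = 0 := F.exact₂.apply_apply_eq_zero w

theorem m₁₂_m₁₁ (a b c : F₁) : F.m₁₂ c (F.m₁₁ a b) = F.m₁₂ a (F.m₁₁ b c) := by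
  apply F.injective
  simp only [F.d₃_m₁₂, F.d₂_m₁₁, map_sub, map_smul]
  rw [← F.isAlt.neg a c, ← F.isAlt.neg b c]
  module

/-- The differential graded algebra structure determined by an alternating product on `F₁`: as `d₃`
is injective, the Leibniz rule leaves exactly one choice for the product `F₁ × F₂ → F₃`. -/
noncomputable def ofIsAlt (d₁ : F₁ →ₗ[R] R) (d₂ : F₂ →ₗ[R] F₁) (d₃ : F₃ →ₗ[R] F₂)
    (m : F₁ →ₗ[R] F₁ →ₗ[R] F₂) (h₁ : Function.Exact d₂ d₁) (h₂ : Function.Exact d₃ d₂)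
    (h₃ : Function.Injective d₃) (hm : m.IsAlt)
    (hd₂ : ∀ a b, d₂ (m a b) = d₁ a • b - d₁ b • a) : DGResolution R F₁ F₂ F₃ :=
  have hlift := exists_bilin_lift_of_injective h₃ (LinearMap.lsmul R F₂ ∘ₗ d₁ - m.compl₂ d₂)
    fun a z => (h₂ _).1 (by simp [hd₂, h₁.apply_apply_eq_zero])
  ⟨d₁, d₂, d₃, m, hlift.choose, h₁, h₂, h₃, hm, hd₂, hlift.choose_spec⟩

/-- Minimality with respect to `I`: the differentials vanish modulo `I`. -/
structure IsMinimal (I : Ideal R) : Prop where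
  d₁_mem : ∀ a, F.d₁ a ∈ I
  d₂_mem : ∀ z, F.d₂ z ∈ I • (⊤ : Submodule R F₁)
  d₃_mem : ∀ w, F.d₃ w ∈ I • (⊤ : Submodule R F₂)

end Basic

section Congr

variable {F₁' F₂' F₃' : Type*} [AddCommGroup F₁'] [Module R F₁'] [AddCommGroup F₂'] [Module R F₂']
  [AddCommGroup F₃'] [Module R F₃'] (F : DGResolution R F₁ F₂ F₃)
  (e₁ : F₁ ≃ₗ[R] F₁') (e₂ : F₂ ≃ₗ[R] F₂') (e₃ : F₃ ≃ₗ[R] F₃')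

/-- Transport of a differential graded resolution along linear equivalences in each degree. -/
def congr : DGResolution R F₁' F₂' F₃' where
  d₁ := F.d₁ ∘ₗ e₁.symm
  d₂ := e₁ ∘ₗ F.d₂ ∘ₗ e₂.symm
  d₃ := e₂ ∘ₗ F.d₃ ∘ₗ e₃.symm
  m₁₁ := (F.m₁₁.compl₁₂ e₁.symm.toLinearMap e₁.symm.toLinearMap).compr₂ e₂.toLinearMap
  m₁₂ := (F.m₁₂.compl₁₂ e₁.symm.toLinearMap e₂.symm.toLinearMap).compr₂ e₃.toLinearMap
  exact₁ := F.exact₁.of_ladder_linearEquiv_of_exact (e₁ := e₂) (e₂ := e₁)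
    (e₃ := LinearEquiv.refl R R) (by ext; simp) (by ext; simp)
  exact₂ := F.exact₂.of_ladder_linearEquiv_of_exact (e₁ := e₃) (e₂ := e₂) (e₃ := e₁)
    (by ext; simp) (by ext; simp)
  injective := e₂.injective.comp (F.injective.comp e₃.symm.injective)
  isAlt a := by simp [F.isAlt (e₁.symm a)]
  d₂_m₁₁ a b := by simp [F.d₂_m₁₁]
  d₃_m₁₂ a z := by simp [F.d₃_m₁₂]

theorem congr_m₁₂ (a : F₁') (z : F₂') :
    (F.congr e₁ e₂ e₃).m₁₂ a z = e₃ (F.m₁₂ (e₁.symm a) (e₂.symm z)) := rfl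

theorem range_congr_d₁ : LinearMap.range (F.congr e₁ e₂ e₃).d₁ = LinearMap.range F.d₁ :=
  e₁.symm.range_comp F.d₁

variable {F} {I : Ideal R}

theorem IsMinimal.congr (hF : F.IsMinimal I) : (F.congr e₁ e₂ e₃).IsMinimal I where
  d₁_mem _ := hF.d₁_mem _
  d₂_mem _ := map_mem_smul_top e₁.toLinearMap (hF.d₂_mem _)
  d₃_mem _ := map_mem_smul_top e₂.toLinearMap (hF.d₃_mem _)

end Congr

/-- The normal form of class `G` for the product of `F` modulo `I`: `b₁ (e₁ t) * b₂ (e₂ t) = b₃ o`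
for `t : T` and all other products of basis elements vanish. The paper's `G(r)` has `r` the
cardinality of `T`; arbitrary index types leave room for trimming to discard some `t`. -/
structure IsStandardG {T ι₁ ι₂ ι₃ : Type*} (F : DGResolution R F₁ F₂ F₃) (I : Ideal R)
    (b₁ : Module.Basis ι₁ R F₁) (b₂ : Module.Basis ι₂ R F₂) (b₃ : Module.Basis ι₃ R F₃)
    (e₁ : T ↪ ι₁) (e₂ : T ↪ ι₂) (o : ι₃) : Prop where
  m₁₁_mem : ∀ a b, F.m₁₁ a b ∈ I • (⊤ : Submodule R F₂)
  m₁₂_sub_mem : ∀ t, F.m₁₂ (b₁ (e₁ t)) (b₂ (e₂ t)) - b₃ o ∈ I • (⊤ : Submodule R F₃)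
  m₁₂_mem : ∀ i j, (∀ t, e₁ t = i → e₂ t ≠ j) →
    F.m₁₂ (b₁ i) (b₂ j) ∈ I • (⊤ : Submodule R F₃)

namespace IsStandardG

variable {T ι₁ ι₂ ι₃ : Type*} {F : DGResolution R F₁ F₂ F₃} {I : Ideal R}
  {b₁ : Module.Basis ι₁ R F₁} {b₂ : Module.Basis ι₂ R F₂} {b₃ : Module.Basis ι₃ R F₃}
  {e₁ : T ↪ ι₁} {e₂ : T ↪ ι₂} {o : ι₃}

theorem m₁₂_mem_span_sup (hF : F.IsStandardG I b₁ b₂ b₃ e₁ e₂ o) (a : F₁) (z : F₂) :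
    F.m₁₂ a z ∈ R ∙ b₃ o ⊔ I • (⊤ : Submodule R F₃) := by
  refine bilin_mem_of_basis b₁ b₂ (fun i j => ?_) a z
  by_cases hij : ∃ t, e₁ t = i ∧ e₂ t = j
  · obtain ⟨t, rfl, rfl⟩ := hij
    exact Submodule.mem_sup.2 ⟨b₃ o, Submodule.mem_span_singleton_self _, _, hF.m₁₂_sub_mem t,
      add_sub_cancel _ _⟩
  · exact Submodule.mem_sup_right (hF.m₁₂_mem i j fun t hi hj => hij ⟨t, hi, hj⟩)

theorem congr_basis {F₁' κ : Type*} [AddCommGroup F₁'] [Module R F₁']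
    (hF : F.IsStandardG I b₁ b₂ b₃ e₁ e₂ o) (c : Module.Basis κ R F₁') (E : ι₁ ≃ κ) :
    (F.congr (b₁.equiv c E) (.refl R F₂) (.refl R F₃)).IsStandardG I c b₂ b₃
      (e₁.trans E.toEmbedding) e₂ o where
  m₁₁_mem _ _ := hF.m₁₁_mem _ _
  m₁₂_sub_mem t := by
    rw [congr_m₁₂]
    simpa using hF.m₁₂_sub_mem t
  m₁₂_mem k j hkj := by
    rw [congr_m₁₂]
    simpa using hF.m₁₂_mem (E.symm k) j fun t ht => hkj t (by simp [ht])

end IsStandardG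

end DGResolution

section TorClassG

open DGResolution

theorem exists_equiv_fin_extending {T ι : Type*} [Fintype T] [Finite ι] (e : T ↪ ι) :
    ∃ n ≥ Fintype.card T, ∃ E : ι ≃ Fin n, ∀ t, (E (e t) : ℕ) = Fintype.equivFin T t := by
  classical
  have := Fintype.ofFinite ι
  let ε : ι ≃ Fin (Fintype.card T) ⊕ Fin (Fintype.card {i // i ∉ Set.range e}) :=
    (Equiv.sumCompl (· ∈ Set.range e)).symm.trans <| Equiv.sumCongr
      ((Equiv.ofInjective e e.injective).symm.trans (Fintype.equivFin T)) (Fintype.equivFin _)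
  have hε (t : T) : ε (e t) = Sum.inl (Fintype.equivFin T t) := by
    have ht : (Equiv.sumCompl (· ∈ Set.range e)).symm (e t) = Sum.inl ⟨e t, t, rfl⟩ :=
      Equiv.sumCompl_symm_apply_of_pos ⟨t, rfl⟩
    simp [ε, ht, Equiv.ofInjective_symm_apply]
  exact ⟨_, Nat.le_add_right _ _, ε.trans finSumFinEquiv, fun t => by simp [hε]⟩

theorem exists_linearEquiv_fin_extending {R M T ι : Type*} [CommRing R] [AddCommGroup M]
    [Module R M] [Fintype T] [Finite ι] (b : Module.Basis ι R M) (e : T ↪ ι) :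
    ∃ n ≥ Fintype.card T, ∃ (E : Fin n ≃ ι) (φ : M ≃ₗ[R] (Fin n → R)),
      (∀ i, φ.symm (Pi.single i 1) = b (E i)) ∧
        ∀ t i, e t = E i ↔ (Fintype.equivFin T t : ℕ) = i := by
  obtain ⟨n, hn, E, hE⟩ := exists_equiv_fin_extending e
  refine ⟨n, hn, E.symm, b.equiv (Pi.basisFun R (Fin n)) E, fun i => ?_, fun t i => ?_⟩
  · rw [← Pi.basisFun_apply, Module.Basis.equiv_symm, Module.Basis.equiv_apply]
  · rw [Equiv.eq_symm_apply, Fin.ext_iff, hE]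

variable {R : Type} [CommRing R] [IsLocalRing R] {F₁ F₂ F₃ T ι₁ ι₂ ι₃ : Type*}
  [AddCommGroup F₁] [Module R F₁] [AddCommGroup F₂] [Module R F₂] [AddCommGroup F₃] [Module R F₃]

theorem DGResolution.IsMinimal.hasTorClassG_of_fin {n₁ n₂ n₃ r : ℕ} (h₃ : 0 < n₃)
    (hr₁ : r ≤ n₁) (hr₂ : r ≤ n₂) {F : DGResolution R (Fin n₁ → R) (Fin n₂ → R) (Fin n₃ → R)}
    (hF : F.IsMinimal (maximalIdeal R))
    (hm₁₁ : ∀ a b, F.m₁₁ a b ∈ maximalIdeal R • (⊤ : Submodule R (Fin n₂ → R)))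
    (hm₁₂ : ∀ (i : Fin n₁) (j : Fin n₂), F.m₁₂ (Pi.single i 1) (Pi.single j 1) -
      (if (i : ℕ) = j ∧ (i : ℕ) < r then Pi.single (⟨0, h₃⟩ : Fin n₃) 1 else 0) ∈
        maximalIdeal R • (⊤ : Submodule R (Fin n₃ → R))) :
    HasTorClassG R (LinearMap.range F.d₁) r :=
  ⟨n₁, n₂, n₃, h₃, hr₁, hr₂, F.d₁, F.d₂, F.d₃, F.m₁₁, F.m₁₂, rfl,
    F.exact₁.linearMap_ker_eq, F.exact₂.linearMap_ker_eq, LinearMap.ker_eq_bot.2 F.injective,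
    hF.d₁_mem, hF.d₂_mem, hF.d₃_mem, F.d₂_m₁₁, F.isAlt, fun a b => (F.isAlt.neg b a).symm,
    F.d₃_m₁₂, F.m₁₂_m₁₁, fun _ _ => hm₁₁ _ _, hm₁₂⟩

theorem DGResolution.IsStandardG.hasTorClassG [Fintype T] [Finite ι₁] [Finite ι₂] [Finite ι₃]
    {F : DGResolution R F₁ F₂ F₃} {b₁ : Module.Basis ι₁ R F₁} {b₂ : Module.Basis ι₂ R F₂}
    {b₃ : Module.Basis ι₃ R F₃} {e₁ : T ↪ ι₁} {e₂ : T ↪ ι₂} {o : ι₃}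
    (hF : F.IsStandardG (maximalIdeal R) b₁ b₂ b₃ e₁ e₂ o) (hmin : F.IsMinimal (maximalIdeal R)) :
    HasTorClassG R (LinearMap.range F.d₁) (Fintype.card T) := by
  obtain ⟨n₁, hr₁, E₁, φ₁, hφ₁, hE₁⟩ := exists_linearEquiv_fin_extending b₁ e₁
  obtain ⟨n₂, hr₂, E₂, φ₂, hφ₂, hE₂⟩ := exists_linearEquiv_fin_extending b₂ e₂
  obtain ⟨n₃, h₃, E₃, φ₃, hφ₃, hE₃⟩ :=
    exists_linearEquiv_fin_extending b₃ (⟨fun _ => o, fun _ _ _ => rfl⟩ : Unit ↪ ι₃)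
  have ho : φ₃ (b₃ o) = Pi.single ⟨0, h₃⟩ 1 := by
    have hE : o = E₃ ⟨0, h₃⟩ := (hE₃ () _).2 (by simp)
    rw [hE, ← hφ₃, φ₃.apply_symm_apply]
  rw [← F.range_congr_d₁ φ₁ φ₂ φ₃]
  refine (hmin.congr φ₁ φ₂ φ₃).hasTorClassG_of_fin h₃ hr₁ hr₂
    (fun _ _ => map_mem_smul_top φ₂.toLinearMap (hF.m₁₁_mem _ _)) fun i j => ?_
  rw [congr_m₁₂, hφ₁, hφ₂]
  split_ifs with hij
  · obtain ⟨heq, hlt⟩ := hij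
    let t := (Fintype.equivFin T).symm ⟨i, hlt⟩
    rw [← ho, ← map_sub, ← (hE₁ t i).2 (by simp [t]), ← (hE₂ t j).2 (by simp [t, heq])]
    exact map_mem_smul_top φ₃.toLinearMap (hF.m₁₂_sub_mem t)
  · rw [sub_zero]
    refine map_mem_smul_top φ₃.toLinearMap (hF.m₁₂_mem _ _ fun t hti htj => hij ?_)
    rw [hE₁] at hti
    rw [hE₂] at htj
    exact ⟨hti.symm.trans htj, hti ▸ (Fintype.equivFin T t).isLt⟩

end TorClassG

end DGResolution

section Trim

variable {R : Type*} [CommRing R] {I : Ideal R} {A B F₂ F₃ K₁ K₂ K₃ : Type*}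
  [AddCommGroup A] [Module R A] [AddCommGroup B] [Module R B] [AddCommGroup F₂] [Module R F₂]
  [AddCommGroup F₃] [Module R F₃] [AddCommGroup K₁] [Module R K₁] [AddCommGroup K₂] [Module R K₂]
  [AddCommGroup K₃] [Module R K₃]

/-- The choices needed to build a differential graded resolution of the trimmed ideal out of `F` and
a resolution `K` of `B / I B`, where `B` is spanned by the basis elements of `F₁` being trimmed:
`q₁` and `q₂` lift the `B`-component of `d₂` through `K`, and `v` is the `K₂`-component of the
product of two elements of degree one. -/
structure TrimData (F : DGResolution R (A × B) F₂ F₃) (K : LinearResolution I B K₁ K₂ K₃) where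
  q₁ : F₂ →ₗ[R] K₁
  q₂ : F₃ →ₗ[R] K₂
  v : (A × K₁) →ₗ[R] (A × K₁) →ₗ[R] K₂
  k₁_q₁ : ∀ z, K.k₁ (q₁ z) = (F.d₂ z).2
  k₂_q₂ : ∀ w, K.k₂ (q₂ w) = q₁ (F.d₃ w)
  isAlt : v.IsAlt
  k₂_v : ∀ g h, K.k₂ (v g h) = F.d₁ (K.proj A g) • h.2 - F.d₁ (K.proj A h) • g.2 -
    q₁ (F.m₁₁ (K.proj A g) (K.proj A h))

namespace TrimData

section Construction

variable {F : DGResolution R (A × B) F₂ F₃} {K : LinearResolution I B K₁ K₂ K₃} (D : TrimData F K)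

/-- The differential `F₂ ⊕ K₂ → A ⊕ K₁` of the trimmed resolution. -/
def d₂ : F₂ × K₂ →ₗ[R] A × K₁ :=
  (LinearMap.fst R A B ∘ₗ F.d₂ ∘ₗ LinearMap.fst R F₂ K₂).prod (D.q₁.coprod K.k₂)

/-- The differential `F₃ ⊕ K₃ → F₂ ⊕ K₂` of the trimmed resolution; the sign of `q₂` makes
`d₂ ∘ d₃` vanish. -/
def d₃ : F₃ × K₃ →ₗ[R] F₂ × K₂ :=
  (F.d₃ ∘ₗ LinearMap.fst R F₃ K₃).prod ((-D.q₂).coprod K.k₃)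

/-- The product of two elements of degree one in the trimmed resolution: their product in `F`,
corrected by `v` so that the Leibniz rule holds in `K₁`. -/
def m₁₁ : A × K₁ →ₗ[R] A × K₁ →ₗ[R] F₂ × K₂ :=
  (F.m₁₁.compl₁₂ (K.proj A) (K.proj A)).compr₂ (LinearMap.inl R F₂ K₂) +
    D.v.compr₂ (LinearMap.inr R F₂ K₂)

theorem d₂_apply (y : F₂ × K₂) : D.d₂ y = ((F.d₂ y.1).1, D.q₁ y.1 + K.k₂ y.2) := rfl

theorem d₃_apply (w : F₃ × K₃) : D.d₃ w = (F.d₃ w.1, -D.q₂ w.1 + K.k₃ w.2) := rfl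

theorem m₁₁_apply (g h : A × K₁) :
    D.m₁₁ g h = (F.m₁₁ (K.proj A g) (K.proj A h), D.v g h) := by
  simp [m₁₁]

theorem proj_d₂ (y : F₂ × K₂) : K.proj A (D.d₂ y) = F.d₂ y.1 := by
  ext1
  · rfl
  · simp [d₂_apply, K.proj_apply, D.k₁_q₁, K.k₁_k₂]

theorem exact₁ : Function.Exact D.d₂ (F.d₁ ∘ₗ K.proj A) := by
  refine fun g => ⟨fun hg => ?_, ?_⟩
  · obtain ⟨z, hz⟩ := (F.exact₁ _).1 hg
    obtain ⟨u, hu⟩ := (K.exact₁ (g.2 - D.q₁ z)).1 (by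
      simp [D.k₁_q₁, hz, K.proj_apply])
    refine ⟨(z, u), ?_⟩
    rw [d₂_apply, hu, hz, add_sub_cancel]
    rfl
  · rintro ⟨y, rfl⟩
    rw [LinearMap.comp_apply, D.proj_d₂, F.d₁_d₂]

theorem exact₂ : Function.Exact D.d₃ D.d₂ := by
  refine fun y => ⟨fun hy => ?_, ?_⟩
  · obtain ⟨w, hw⟩ := (F.exact₂ y.1).1 (by rw [← D.proj_d₂, hy, map_zero])
    have hsnd : D.q₁ y.1 + K.k₂ y.2 = 0 := congrArg Prod.snd hy
    obtain ⟨t, ht⟩ := (K.exact₂ (y.2 + D.q₂ w)).1 (by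
      rw [map_add, D.k₂_q₂, hw, add_comm, hsnd])
    refine ⟨(w, t), ?_⟩
    rw [d₃_apply, ht, hw, add_comm y.2, neg_add_cancel_left]
  · rintro ⟨w, rfl⟩
    simp [d₂_apply, d₃_apply, F.d₂_d₃, D.k₂_q₂, K.k₂_k₃]

theorem d₃_injective : Function.Injective D.d₃ := by
  refine (injective_iff_map_eq_zero _).2 fun w hw => ?_
  obtain ⟨hfst, hsnd⟩ := Prod.mk.inj hw
  have hw₁ : w.1 = 0 := F.injective (by simpa using hfst)
  refine Prod.ext hw₁ (K.injective ?_)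
  simpa [hw₁] using hsnd

theorem m₁₁_isAlt : D.m₁₁.IsAlt := fun g => by
  rw [m₁₁_apply, F.isAlt, D.isAlt]
  rfl

theorem d₂_m₁₁ (g h : A × K₁) :
    D.d₂ (D.m₁₁ g h) = F.d₁ (K.proj A g) • h - F.d₁ (K.proj A h) • g := by
  rw [m₁₁_apply, d₂_apply, F.d₂_m₁₁, D.k₂_v, add_sub_cancel]
  rfl

/-- The differential graded resolution of the trimmed ideal determined by `D`, in which each trimmed
generator `d₁ b` is replaced by the generators of `I * d₁ b`. -/
noncomputable def trim : DGResolution R (A × K₁) (F₂ × K₂) (F₃ × K₃) :=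
  .ofIsAlt (F.d₁ ∘ₗ K.proj A) D.d₂ D.d₃ D.m₁₁ D.exact₁ D.exact₂ D.d₃_injective D.m₁₁_isAlt D.d₂_m₁₁

theorem range_trim_d₁ : LinearMap.range D.trim.d₁ =
    LinearMap.range (F.d₁ ∘ₗ LinearMap.inl R A B) ⊔
      I * LinearMap.range (F.d₁ ∘ₗ LinearMap.inr R A B) := by
  have hproj : LinearMap.range (K.proj A) = Submodule.map (LinearMap.inl R A B) ⊤ ⊔
      Submodule.map (LinearMap.inr R A B) (I • ⊤) := by
    rw [LinearResolution.proj, LinearMap.range_prodMap, LinearMap.range_id, K.range_k₁,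
      Submodule.map_inl, Submodule.map_inr]
    simp
  change LinearMap.range (F.d₁ ∘ₗ K.proj A) = _
  rw [LinearMap.range_comp, hproj, Submodule.map_sup, ← Submodule.map_comp, ← Submodule.map_comp,
    Submodule.map_top, Submodule.map_smul'', Submodule.map_top, smul_eq_mul]

theorem d₃_trim_m₁₂ (g : A × K₁) (y : F₂ × K₂) :
    D.d₃ (D.trim.m₁₂ g y) = F.d₁ (K.proj A g) • y - D.m₁₁ g (D.d₂ y) :=
  D.trim.d₃_m₁₂ g y

theorem trim_m₁₂_fst (g : A × K₁) (y : F₂ × K₂) :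
    (D.trim.m₁₂ g y).1 = F.m₁₂ (K.proj A g) y.1 := by
  apply F.injective
  have hfst := congrArg Prod.fst (D.d₃_trim_m₁₂ g y)
  rw [m₁₁_apply, proj_d₂] at hfst
  exact hfst.trans (F.d₃_m₁₂ _ _).symm

theorem k₃_trim_m₁₂_snd (g : A × K₁) (y : F₂ × K₂) : K.k₃ (D.trim.m₁₂ g y).2 =
    F.d₁ (K.proj A g) • y.2 - D.v g (D.d₂ y) + D.q₂ (F.m₁₂ (K.proj A g) y.1) := by
  have hsnd := congrArg Prod.snd (D.d₃_trim_m₁₂ g y)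
  rw [d₃_apply, m₁₁_apply, trim_m₁₂_fst] at hsnd
  exact neg_add_eq_iff_eq_add.1 hsnd |>.trans (add_comm _ _)

end Construction

/-- The lifts `q₁` and `v` vanish modulo `I`; for minimal `F` this makes the trimmed resolution
minimal, because `q₂` then vanishes modulo `I` too (`IsMinimal.q₂_mem`). -/
structure IsMinimal {F : DGResolution R (A × B) F₂ F₃} {K : LinearResolution I B K₁ K₂ K₃}
    (D : TrimData F K) : Prop where
  q₁_mem : ∀ z, D.q₁ z ∈ I • (⊤ : Submodule R K₁)
  v_mem : ∀ g h, D.v g h ∈ I • (⊤ : Submodule R K₂)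

section Minimal

variable {F : DGResolution R (A × B) F₂ F₃} {K : LinearResolution I B K₁ K₂ K₃} {D : TrimData F K}

theorem IsMinimal.q₂_mem (hD : D.IsMinimal) (hF : F.IsMinimal I) (w : F₃) :
    D.q₂ w ∈ I • (⊤ : Submodule R K₂) := by
  apply K.mem_of_k₂_mem
  rw [D.k₂_q₂]
  exact map_mem_sq_smul_top hD.q₁_mem (hF.d₃_mem w)

theorem IsMinimal.d₂_mem (hD : D.IsMinimal) (hF : F.IsMinimal I) (y : F₂ × K₂) :
    D.d₂ y ∈ I • (⊤ : Submodule R (A × K₁)) :=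
  mk_mem_smul_top (map_mem_smul_top (LinearMap.fst R A B) (hF.d₂_mem y.1))
    (add_mem (hD.q₁_mem y.1) (K.k₂_mem y.2))

theorem IsMinimal.d₃_mem (hD : D.IsMinimal) (hF : F.IsMinimal I) (w : F₃ × K₃) :
    D.d₃ w ∈ I • (⊤ : Submodule R (F₂ × K₂)) :=
  mk_mem_smul_top (hF.d₃_mem w.1) (add_mem (neg_mem (hD.q₂_mem hF w.1)) (K.k₃_mem w.2))

theorem IsMinimal.trim (hD : D.IsMinimal) (hF : F.IsMinimal I) : D.trim.IsMinimal I where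
  d₁_mem g := hF.d₁_mem (K.proj A g)
  d₂_mem := hD.d₂_mem hF
  d₃_mem := hD.d₃_mem hF

theorem IsMinimal.m₁₁_mem (hD : D.IsMinimal)
    (hm : ∀ a b, F.m₁₁ a b ∈ I • (⊤ : Submodule R F₂)) (g h : A × K₁) :
    D.m₁₁ g h ∈ I • (⊤ : Submodule R (F₂ × K₂)) := by
  rw [m₁₁_apply]
  exact mk_mem_smul_top (hm _ _) (hD.v_mem g h)

theorem IsMinimal.v_d₂_mem (hD : D.IsMinimal) (hF : F.IsMinimal I) (g : A × K₁) (y : F₂ × K₂) :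
    D.v g (D.d₂ y) ∈ I ^ 2 • (⊤ : Submodule R K₂) :=
  map_mem_sq_smul_top (hD.v_mem g) (hD.d₂_mem hF y)

variable (F K) in
theorem m₁₂_proj_sub_mem (g : A × K₁) (z : F₂) :
    F.m₁₂ (K.proj A g) z - F.m₁₂ (g.1, 0) z ∈ I • (⊤ : Submodule R F₃) := by
  rw [K.proj_eq_add, map_add, LinearMap.add_apply, add_sub_cancel_left]
  exact map_mem_smul_top (F.m₁₂.flip z) (K.inr_k₁_mem g.2)

theorem IsMinimal.trim_m₁₂_sub_mem (hD : D.IsMinimal) (hF : F.IsMinimal I)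
    (hd₁ : ∀ g (u : K₂), F.d₁ (K.proj A g) • u ∈ I ^ 2 • (⊤ : Submodule R K₂))
    (hq₂ : ∀ a z, D.q₂ (F.m₁₂ (a, 0) z) ∈ I ^ 2 • (⊤ : Submodule R K₂))
    (g : A × K₁) (y : F₂ × K₂) :
    D.trim.m₁₂ g y - LinearMap.inl R F₃ K₃ (F.m₁₂ (g.1, 0) y.1) ∈
      I • (⊤ : Submodule R (F₃ × K₃)) := by
  have hsnd : (D.trim.m₁₂ g y).2 ∈ I • (⊤ : Submodule R K₃) := by
    apply K.mem_of_k₃_mem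
    rw [D.k₃_trim_m₁₂_snd]
    refine add_mem (sub_mem (hd₁ _ _) (hD.v_d₂_mem hF g y)) ?_
    have hq := map_mem_sq_smul_top (hD.q₂_mem hF) (m₁₂_proj_sub_mem F K g y.1)
    simpa only [map_sub, sub_add_cancel] using add_mem hq (hq₂ g.1 y.1)
  refine mk_mem_smul_top ?_ ?_
  · rw [trim_m₁₂_fst]
    exact m₁₂_proj_sub_mem F K g y.1
  · simpa using hsnd

/-- If some `m₁₂ (a, 0) z` has a unit coefficient on `o`, rescale `a` so that
`m₁₂ (a, 0) z ≡ o` modulo `I`. The Leibniz rule for `v` then displays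
`v (a, 0) (d₂ (z, 0)) - q₂ (m₁₂ (a, 0) z - o)` as a lift of `q₁ (d₃ o)` lying in `I²`. -/
theorem IsMinimal.exists_k₂_eq [I.IsMaximal] (hD : D.IsMinimal) (hF : F.IsMinimal I) {o m : F₃}
    {a : A} {z : F₂} {c : R} (hc : c ∉ I) (hm : m ∈ I • (⊤ : Submodule R F₃))
    (ham : c • o + m = F.m₁₂ (a, 0) z) :
    ∃ u ∈ I ^ 2 • (⊤ : Submodule R K₂), K.k₂ u = D.q₁ (F.d₃ o) := by
  obtain ⟨e, i, hi, hei⟩ := Ideal.IsMaximal.exists_inv ‹I.IsMaximal› hc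
  let g : A × K₁ := (e • a, 0)
  have hproj : K.proj A g = e • (a, 0) := by simp [g, K.proj_apply]
  have hmo : F.m₁₂ (K.proj A g) z - o ∈ I • (⊤ : Submodule R F₃) := by
    have hsum : F.m₁₂ (K.proj A g) z - o = e • m - i • o := by
      rw [hproj, map_smul, LinearMap.smul_apply, ← ham, smul_add, smul_smul,
        eq_sub_of_add_eq hei]
      module
    rw [hsum]
    exact sub_mem (Submodule.smul_mem _ e hm) (Submodule.smul_mem_smul hi trivial)
  refine ⟨D.v g (D.d₂ (z, 0)) - D.q₂ (F.m₁₂ (K.proj A g) z - o),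
    sub_mem (hD.v_d₂_mem hF g (z, 0)) (map_mem_sq_smul_top (hD.q₂_mem hF) hmo), ?_⟩
  have hv : K.k₂ (D.v g (D.d₂ (z, 0))) = D.q₁ (F.d₃ (F.m₁₂ (K.proj A g) z)) := by
    rw [D.k₂_v, D.proj_d₂, F.d₁_d₂, F.d₃_m₁₂, map_sub, map_smul]
    simp [d₂_apply]
  rw [map_sub, hv, D.k₂_q₂, ← map_sub, ← map_sub, sub_sub_cancel]

theorem IsMinimal.exists_q₂_mem_sq [I.IsMaximal] (hD : D.IsMinimal) (hF : F.IsMinimal I) {o : F₃}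
    {φ : F₃ →ₗ[R] R} (hφ : φ o = 1)
    (hm₁₂ : ∀ a z, F.m₁₂ (a, 0) z ∈ R ∙ o ⊔ I • (⊤ : Submodule R F₃)) :
    ∃ D' : TrimData F K, D'.IsMinimal ∧
      ∀ a z, D'.q₂ (F.m₁₂ (a, 0) z) ∈ I ^ 2 • (⊤ : Submodule R K₂) := by
  by_cases htriv : ∀ a z, F.m₁₂ (a, 0) z ∈ I • (⊤ : Submodule R F₃)
  · exact ⟨D, hD, fun a z => map_mem_sq_smul_top (hD.q₂_mem hF) (htriv a z)⟩
  push Not at htriv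
  obtain ⟨a, z, haz⟩ := htriv
  obtain ⟨_, ho, m, hm, ham⟩ := Submodule.mem_sup.1 (hm₁₂ a z)
  obtain ⟨c, rfl⟩ := Submodule.mem_span_singleton.1 ho
  have hc : c ∉ I := fun hc => haz (ham ▸ add_mem (Submodule.smul_mem_smul hc trivial) hm)
  obtain ⟨u, hu, hku⟩ := hD.exists_k₂_eq hF hc hm ham
  let D' : TrimData F K :=
    { D with
      q₂ := D.q₂ + φ.smulRight (u - D.q₂ o)
      k₂_q₂ := fun w => by simp [D.k₂_q₂, hku] }
  have hD' : D'.IsMinimal := ⟨hD.q₁_mem, hD.v_mem⟩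
  have ho' : D'.q₂ o = u := by simp [D', hφ]
  refine ⟨D', hD', fun a z => ?_⟩
  have hle : R ∙ o ⊔ I • ⊤ ≤ Submodule.comap D'.q₂ (I ^ 2 • ⊤) := by
    refine sup_le ((Submodule.span_singleton_le_iff_mem _ _).2 ?_) fun w hw =>
      map_mem_sq_smul_top (hD'.q₂_mem hF) hw
    rwa [Submodule.mem_comap, ho']
  exact hle (hm₁₂ a z)

end Minimal

section Existence

variable {S : Type*} [Finite S] {F : DGResolution R (A × (S → R)) F₂ F₃}
  (K : LinearResolution I R K₁ K₂ K₃)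

theorem d₁_inl_smul_mem_sq (hd₂ : ∀ z, F.d₂ z ∈ I ^ 2 • (⊤ : Submodule R (A × (S → R)))) (a : A)
    {M : Type*} [AddCommGroup M] [Module R M] (u : S → M) :
    F.d₁ (a, 0) • u ∈ I ^ 2 • (⊤ : Submodule R (S → M)) := by
  classical
  refine mem_smul_top_pi_iff.2 fun s => Submodule.smul_mem_smul ?_ trivial
  have hmem := hd₂ (F.m₁₁ (a, 0) (0, Pi.single s 1))
  rw [F.d₂_m₁₁] at hmem
  simpa using mem_smul_top_pi_iff.1 (map_mem_smul_top (LinearMap.snd R A (S → R)) hmem) s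

theorem d₁_proj_smul_mem_sq (hF : F.IsMinimal I)
    (hd₂ : ∀ z, F.d₂ z ∈ I ^ 2 • (⊤ : Submodule R (A × (S → R)))) (g : A × (S → K₁))
    {M : Type*} [AddCommGroup M] [Module R M] (u : S → M) :
    F.d₁ ((K.pi S).proj A g) • u ∈ I ^ 2 • (⊤ : Submodule R (S → M)) := by
  have hk₁ : F.d₁ (0, (K.pi S).k₁ g.2) ∈ I ^ 2 • (⊤ : Ideal R) :=
    map_mem_sq_smul_top (fun a => by simpa using hF.d₁_mem a) ((K.pi S).inr_k₁_mem g.2)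
  rw [smul_eq_mul, Ideal.mul_top] at hk₁
  rw [(K.pi S).proj_eq_add, map_add, add_smul]
  exact add_mem (d₁_inl_smul_mem_sq hd₂ g.1 u) (Submodule.smul_mem_smul hk₁ trivial)

end Existence

theorem exists_q₁ [Module.Projective R F₂] (F : DGResolution R (A × B) F₂ F₃)
    (K : LinearResolution I B K₁ K₂ K₃) (hd₂ : ∀ z, F.d₂ z ∈ I ^ 2 • (⊤ : Submodule R (A × B))) :
    ∃ q₁ : F₂ →ₗ[R] K₁, (∀ z, K.k₁ (q₁ z) = (F.d₂ z).2) ∧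
      ∀ z, q₁ z ∈ I • (⊤ : Submodule R K₁) :=
  exists_lift_mem (LinearMap.snd R A B ∘ₗ F.d₂) (I • ⊤) fun z => by
    have hz := map_mem_smul_top (LinearMap.snd R A B) (hd₂ z)
    rwa [← K.map_k₁] at hz

theorem exists_q₂ [Module.Projective R F₃] {F : DGResolution R (A × B) F₂ F₃}
    {K : LinearResolution I B K₁ K₂ K₃} {q₁ : F₂ →ₗ[R] K₁}
    (hq₁ : ∀ z, K.k₁ (q₁ z) = (F.d₂ z).2) :
    ∃ q₂ : F₃ →ₗ[R] K₂, ∀ w, K.k₂ (q₂ w) = q₁ (F.d₃ w) := by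
  obtain ⟨q₂, hq₂, -⟩ := exists_lift_mem (g := K.k₂) (q₁ ∘ₗ F.d₃) ⊤ fun w => by
    obtain ⟨u, hu⟩ := (K.exact₁ (q₁ (F.d₃ w))).1 (by rw [hq₁, F.d₂_d₃, Prod.snd_zero])
    exact ⟨u, trivial, hu⟩
  exact ⟨q₂, hq₂⟩

theorem exists_v [Module.Free R A] [Module.Free R K₁] {F : DGResolution R (A × B) F₂ F₃}
    {K : LinearResolution I B K₁ K₂ K₃}
    (hm : ∀ a b, F.m₁₁ a b ∈ I • (⊤ : Submodule R F₂))
    (hd₁ : ∀ g (u : K₁), F.d₁ (K.proj A g) • u ∈ I ^ 2 • (⊤ : Submodule R K₁))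
    {q₁ : F₂ →ₗ[R] K₁} (hk₁ : ∀ z, K.k₁ (q₁ z) = (F.d₂ z).2)
    (hq₁ : ∀ z, q₁ z ∈ I • (⊤ : Submodule R K₁)) :
    ∃ v : (A × K₁) →ₗ[R] (A × K₁) →ₗ[R] K₂, v.IsAlt ∧
      (∀ g h, K.k₂ (v g h) = F.d₁ (K.proj A g) • h.2 - F.d₁ (K.proj A h) • g.2 -
        q₁ (F.m₁₁ (K.proj A g) (K.proj A h))) ∧
      ∀ g h, v g h ∈ I • (⊤ : Submodule R K₂) := by
  let β : (A × K₁) →ₗ[R] (A × K₁) →ₗ[R] K₁ :=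
    (LinearMap.lsmul R K₁).compl₁₂ (F.d₁ ∘ₗ K.proj A) (LinearMap.snd R A K₁)
  let c := β - β.flip - (F.m₁₁.compl₁₂ (K.proj A) (K.proj A)).compr₂ q₁
  have hc (g h : A × K₁) : c g h = F.d₁ (K.proj A g) • h.2 - F.d₁ (K.proj A h) • g.2 -
    q₁ (F.m₁₁ (K.proj A g) (K.proj A h)) := rfl
  have halt : c.IsAlt := fun g => by rw [hc, F.isAlt, map_zero, sub_self, sub_zero]
  have hcycle (g h : A × K₁) : K.k₁ (c g h) = 0 := by
    simp [hc, hk₁, F.d₂_m₁₁, K.proj_apply]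
  refine exists_alternating_lift_mem halt (I • ⊤) fun g h => ?_
  obtain ⟨u, hu⟩ := (K.exact₁ _).1 (hcycle g h)
  refine ⟨u, K.mem_of_k₂_mem ?_, hu⟩
  rw [hu, hc]
  exact sub_mem (sub_mem (hd₁ g _) (hd₁ h _)) (map_mem_sq_smul_top hq₁ (hm _ _))

theorem exists_isMinimal {S : Type*} [Finite S] [Module.Free R A] [Module.Free R K₁]
    [Module.Projective R F₂] [Module.Projective R F₃] {F : DGResolution R (A × (S → R)) F₂ F₃}
    (K : LinearResolution I R K₁ K₂ K₃) (hF : F.IsMinimal I)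
    (hm : ∀ a b, F.m₁₁ a b ∈ I • (⊤ : Submodule R F₂))
    (hd₂ : ∀ z, F.d₂ z ∈ I ^ 2 • (⊤ : Submodule R (A × (S → R)))) :
    ∃ D : TrimData F (K.pi S), D.IsMinimal := by
  obtain ⟨q₁, hk₁, hq₁⟩ := exists_q₁ F (K.pi S) hd₂
  obtain ⟨q₂, hq₂⟩ := exists_q₂ hk₁
  obtain ⟨v, halt, hv, hvmem⟩ := exists_v hm (fun g => d₁_proj_smul_mem_sq K hF hd₂ g) hk₁ hq₁
  exact ⟨⟨q₁, q₂, v, hk₁, hq₂, halt, hv⟩, hq₁, hvmem⟩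

end TrimData

end Trim

section IndexSet

theorem range_eq_span_image {R M N ι : Type*} [CommRing R] [AddCommGroup M] [Module R M]
    [AddCommGroup N] [Module R N] {σ : Set ι} (b : Module.Basis {i // i ∈ σ} R M) {f : M →ₗ[R] N}
    {g : ι → N} (h : ∀ i, f (b i) = g i) : LinearMap.range f = Submodule.span R (g '' σ) := by
  rw [LinearMap.range_eq_map, ← b.span_eq, Submodule.map_span, ← Set.range_comp,
    Set.image_eq_range]
  exact congrArg _ (congrArg _ (funext h))

theorem card_subtype_apply_notMem {T ι : Type*} [Fintype T] (e : T ↪ ι) (σ : Set ι)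
    [Fintype {t // e t ∉ σ}] :
    Fintype.card {t // e t ∉ σ} = Fintype.card T - (σ ∩ Set.range e).ncard := by
  classical
  rw [← Set.image_preimage_eq_inter_range, Set.ncard_image_of_injective _ e.injective,
    ← Nat.card_coe_set_eq, Nat.card_eq_fintype_card]
  exact Fintype.card_subtype_compl fun t => e t ∈ σ

end IndexSet

section StandardForm

open DGResolution

section Trim

variable {R : Type*} [CommRing R] {I : Ideal R}
  {A B F₂ F₃ K₁ K₂ K₃ T T' κ ι₁ ι₂ ι₃ κ₁ κ₂ κ₃ : Type*}
  [AddCommGroup A] [Module R A] [AddCommGroup B] [Module R B] [AddCommGroup F₂] [Module R F₂]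
  [AddCommGroup F₃] [Module R F₃] [AddCommGroup K₁] [Module R K₁] [AddCommGroup K₂] [Module R K₂]
  [AddCommGroup K₃] [Module R K₃] {F : DGResolution R (A × B) F₂ F₃}
  {K : LinearResolution I B K₁ K₂ K₃} {D : TrimData F K}
  {bA : Module.Basis κ R A} {bB : Module.Basis ι₁ R B} {b₂ : Module.Basis ι₂ R F₂}
  {b₃ : Module.Basis ι₃ R F₃} {e₁ : T ↪ κ ⊕ ι₁} {e₂ : T ↪ ι₂} {o : ι₃}

theorem TrimData.IsMinimal.isStandardG_trim (hD : D.IsMinimal) (hF : F.IsMinimal I)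
    (hstd : F.IsStandardG I (bA.prod bB) b₂ b₃ e₁ e₂ o)
    (hd₁ : ∀ g (u : K₂), F.d₁ (K.proj A g) • u ∈ I ^ 2 • (⊤ : Submodule R K₂))
    (hq₂ : ∀ a z, D.q₂ (F.m₁₂ (a, 0) z) ∈ I ^ 2 • (⊤ : Submodule R K₂))
    (c₁ : Module.Basis κ₁ R K₁) (c₂ : Module.Basis κ₂ R K₂) (c₃ : Module.Basis κ₃ R K₃)
    {j : T' ↪ T} {e₁' : T' ↪ κ} (hj : ∀ t k, e₁ t = Sum.inl k ↔ ∃ t', j t' = t ∧ e₁' t' = k) :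
    D.trim.IsStandardG I (bA.prod c₁) (b₂.prod c₂) (b₃.prod c₃)
      (e₁'.trans .inl) ((j.trans e₂).trans .inl) (Sum.inl o) := by
  have hsub := hD.trim_m₁₂_sub_mem hF hd₁ hq₂
  have hmem {g : A × K₁} {y : F₂ × K₂} (h : F.m₁₂ (g.1, 0) y.1 ∈ I • (⊤ : Submodule R F₃)) :
      D.trim.m₁₂ g y ∈ I • (⊤ : Submodule R (F₃ × K₃)) :=
    (Submodule.sub_mem_iff_left _ (map_mem_smul_top _ h)).1 (hsub g y)
  refine ⟨hD.m₁₁_mem hstd.m₁₁_mem, fun t => ?_, ?_⟩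
  · have ht : F.m₁₂ (bA (e₁' t), 0) (b₂ (e₂ (j t))) - b₃ o ∈ I • (⊤ : Submodule R F₃) := by
      simpa [(hj _ _).2 ⟨t, rfl, rfl⟩, Module.Basis.prod_apply] using hstd.m₁₂_sub_mem (j t)
    have hsum := add_mem (hsub (bA (e₁' t), 0) (b₂ (e₂ (j t)), 0))
      (map_mem_smul_top (LinearMap.inl R F₃ K₃) ht)
    simp only [map_sub, sub_add_sub_cancel] at hsum
    simpa [Module.Basis.prod_apply] using hsum
  · rintro (k | k) (l | l) hkl
    · have hkl' := hstd.m₁₂_mem (Sum.inl k) l fun t hk hl => by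
        obtain ⟨t', rfl, rfl⟩ := (hj t k).1 hk
        exact hkl t' rfl (congrArg Sum.inl hl)
      exact hmem (by simpa [Module.Basis.prod_apply] using hkl')
    all_goals exact hmem (by simp [Module.Basis.prod_apply, Prod.mk_zero_zero])

end Trim

section Local

variable {R : Type} [CommRing R] [IsLocalRing R] {F₁ A F₂ F₃ K₁ K₂ K₃ T T' S κ ι₁ ι₂ ι₃ : Type*}
  [AddCommGroup F₁] [Module R F₁]
  [AddCommGroup A] [Module R A] [AddCommGroup F₂] [Module R F₂]
  [AddCommGroup F₃] [Module R F₃] [AddCommGroup K₁] [Module R K₁] [AddCommGroup K₂] [Module R K₂]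
  [AddCommGroup K₃] [Module R K₃]

theorem DGResolution.IsStandardG.hasTorClassG_trim_inr
    [Module.Free R K₁] [Module.Finite R K₁]
    [Module.Free R K₂] [Module.Finite R K₂] [Module.Free R K₃] [Module.Finite R K₃]
    [Finite S] [Fintype T'] [Finite κ] [Finite ι₂] [Finite ι₃]
    {F : DGResolution R (A × (S → R)) F₂ F₃}
    (K : LinearResolution (maximalIdeal R) R K₁ K₂ K₃) {bA : Module.Basis κ R A}
    {bB : Module.Basis ι₁ R (S → R)} {b₂ : Module.Basis ι₂ R F₂}
    {b₃ : Module.Basis ι₃ R F₃} {e₁ : T ↪ κ ⊕ ι₁} {e₂ : T ↪ ι₂} {o : ι₃}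
    (hstd : F.IsStandardG (maximalIdeal R) (bA.prod bB) b₂ b₃ e₁ e₂ o)
    (hF : F.IsMinimal (maximalIdeal R))
    (hd₂ : ∀ z, F.d₂ z ∈ maximalIdeal R ^ 2 • (⊤ : Submodule R (A × (S → R))))
    {j : T' ↪ T} {e₁' : T' ↪ κ} (hj : ∀ t k, e₁ t = Sum.inl k ↔ ∃ t', j t' = t ∧ e₁' t' = k) :
    HasTorClassG R (LinearMap.range (F.d₁ ∘ₗ LinearMap.inl R A (S → R)) ⊔
      maximalIdeal R * LinearMap.range (F.d₁ ∘ₗ LinearMap.inr R A (S → R))) (Fintype.card T') := by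
  have := Module.Free.of_basis bA
  have := Module.Free.of_basis b₂
  have := Module.Free.of_basis b₃
  obtain ⟨D₀, hD₀⟩ := TrimData.exists_isMinimal K hF hstd.m₁₁_mem hd₂
  obtain ⟨D, hD, hq₂⟩ := hD₀.exists_q₂_mem_sq hF (φ := b₃.coord o) (o := b₃ o) (by simp)
    fun a z => hstd.m₁₂_mem_span_sup (a, 0) z
  rw [← D.range_trim_d₁]
  exact (hD.isStandardG_trim hF hstd (fun g => TrimData.d₁_proj_smul_mem_sq K hF hd₂ g) hq₂
    (Module.Free.chooseBasis R _) (Module.Free.chooseBasis R _) (Module.Free.chooseBasis R _)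
    hj).hasTorClassG (hD.trim hF)

theorem DGResolution.IsStandardG.hasTorClassG_trim [Module.Free R K₁] [Module.Finite R K₁]
    [Module.Free R K₂] [Module.Finite R K₂] [Module.Free R K₃] [Module.Finite R K₃]
    [Finite ι₁] [Finite ι₂] [Finite ι₃]
    {F : DGResolution R F₁ F₂ F₃}
    (K : LinearResolution (maximalIdeal R) R K₁ K₂ K₃)
    {b₁ : Module.Basis ι₁ R F₁} {b₂ : Module.Basis ι₂ R F₂}
    {b₃ : Module.Basis ι₃ R F₃} {e₁ : T ↪ ι₁} {e₂ : T ↪ ι₂} {o : ι₃}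
    (hstd : F.IsStandardG (maximalIdeal R) b₁ b₂ b₃ e₁ e₂ o)
    (hF : F.IsMinimal (maximalIdeal R))
    (hd₂ : ∀ z, F.d₂ z ∈ maximalIdeal R ^ 2 • (⊤ : Submodule R F₁))
    (σ : Set ι₁) [Fintype {t // e₁ t ∉ σ}] :
    HasTorClassG R (Ideal.span ((F.d₁ ∘ b₁) '' σᶜ) ⊔
      maximalIdeal R * Ideal.span ((F.d₁ ∘ b₁) '' σ)) (Fintype.card {t // e₁ t ∉ σ}) := by
  classical
  let E : ι₁ ≃ {i // i ∉ σ} ⊕ {i // i ∈ σ} :=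
    (Equiv.sumCompl (· ∈ σ)).symm.trans (Equiv.sumComm _ _)
  let bA := Pi.basisFun R {i // i ∉ σ}
  let bB := Pi.basisFun R {i // i ∈ σ}
  let φ := b₁.equiv (bA.prod bB) E
  have hφA (i) : φ.symm (bA i, 0) = b₁ i := by
    rw [LinearEquiv.symm_apply_eq, Module.Basis.equiv_apply]
    have hi : E i = Sum.inl i := by simp [E]
    simp [hi, Module.Basis.prod_apply]
  have hφB (i) : φ.symm (0, bB i) = b₁ i := by
    rw [LinearEquiv.symm_apply_eq, Module.Basis.equiv_apply]
    have hi : E i = Sum.inr i := by simp [E]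
    simp [hi, Module.Basis.prod_apply]
  have hj (t) (k : {i // i ∉ σ}) : E (e₁ t) = Sum.inl k ↔
      ∃ t' : {t // e₁ t ∉ σ}, t'.1 = t ∧ e₁.subtypeMap (fun _ ht => ht) t' = k := by
    have hE : E (e₁ t) = Sum.inl k ↔ e₁ t = k := E.eq_symm_apply.symm
    rw [hE]
    refine ⟨fun h => ⟨⟨t, h ▸ k.2⟩, rfl, Subtype.ext h⟩, ?_⟩
    rintro ⟨t', rfl, rfl⟩
    rfl
  have htrim := (hstd.congr_basis (bA.prod bB) E).hasTorClassG_trim_inr K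
    (hF.congr φ _ _) (fun _ => map_mem_smul_top φ.toLinearMap (hd₂ _)) (j := .subtype _) hj
  rwa [range_eq_span_image (σ := σᶜ) (g := F.d₁ ∘ b₁) bA fun i => congrArg F.d₁ (hφA i),
    range_eq_span_image (g := F.d₁ ∘ b₁) bB fun i => congrArg F.d₁ (hφB i)] at htrim

end Local

end StandardForm

end TorAlgebra

theorem trim_quadratic_torclass_G_general {R : Type} [CommRing R] [IsLocalRing R] {x : Fin 3 → R}
    (hreg : RingTheory.Sequence.IsWeaklyRegular R [x 0, x 1, x 2])
    (hx : Ideal.span (Set.range x) = maximalIdeal R) {n₁ n₂ n₃ r : ℕ} (h₃ : 0 < n₃)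
    (hr₁ : r ≤ n₁) (hr₂ : r ≤ n₂)
    {F : TorAlgebra.DGResolution R (Fin n₁ → R) (Fin n₂ → R) (Fin n₃ → R)}
    (hF : F.IsMinimal (maximalIdeal R))
    (hm₁₁ : ∀ a b, F.m₁₁ (Pi.single a 1) (Pi.single b 1) ∈
      maximalIdeal R • (⊤ : Submodule R (Fin n₂ → R)))
    (hm₁₂ : ∀ (a : Fin n₁) (b : Fin n₂), F.m₁₂ (Pi.single a 1) (Pi.single b 1) -
      (if (a : ℕ) = b ∧ (a : ℕ) < r then Pi.single (⟨0, h₃⟩ : Fin n₃) 1 else 0) ∈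
        maximalIdeal R • (⊤ : Submodule R (Fin n₃ → R)))
    (hquad : ∀ z, F.d₂ z ∈ maximalIdeal R ^ 2 • (⊤ : Submodule R (Fin n₁ → R)))
    (σ : Finset (Fin n₁)) :
    HasTorClassG R (trimIdeal R (fun i => F.d₁ (Pi.single i 1)) σ)
      (r - ((σ : Set (Fin n₁)) ∩ {i | (i : ℕ) < r}).ncard) := by
  have hstd : F.IsStandardG (maximalIdeal R) (Pi.basisFun R _) (Pi.basisFun R _) (Pi.basisFun R _)
      (Fin.castLEEmb hr₁) (Fin.castLEEmb hr₂) ⟨0, h₃⟩ := by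
    refine ⟨TorAlgebra.bilin_mem_of_basis (Pi.basisFun R _) (Pi.basisFun R _) (by simpa using hm₁₁),
      fun t => ?_, fun i j hij => ?_⟩
    · simpa using hm₁₂ (t.castLE hr₁) (t.castLE hr₂)
    · have h := hm₁₂ i j
      rw [if_neg fun h => hij ⟨i, h.2⟩ (Fin.ext rfl) (Fin.ext h.1), sub_zero] at h
      simpa using h
  have hrange : Set.range (Fin.castLEEmb hr₁) = {i : Fin n₁ | (i : ℕ) < r} := by
    ext i
    exact ⟨by rintro ⟨t, rfl⟩; exact t.2, fun hi => ⟨⟨i, hi⟩, rfl⟩⟩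
  have htrim := hstd.hasTorClassG_trim (.koszul hreg hx) hF hquad σ
  rw [TorAlgebra.card_subtype_apply_notMem, Fintype.card_fin, hrange] at htrim
  simp only [Pi.basisFun_apply, Function.comp_def] at htrim
  exact htrim

/-!
STATEMENT 8 (Corollary 4.9): in the situation of Lemma 4.8 (regular local of dimension 3,
`R/I` of class `G(r)` with minimal DG-algebra resolution `F` in standard form and
`F1 · F1 ⊆ 𝔪² F₂`), assume moreover `d₂(F₂) ⊆ 𝔪² F₁`.  Then for every index set `σ`
the trimmed ideal `tm_σ(I)` defines a ring of Tor-algebra class `G(r - |σ ∩ [r]|)`.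
-/
theorem trim_quadratic_torclass_G
    {R : Type} [CommRing R] [IsNoetherianRing R] [IsLocalRing R]
    -- regular local of dimension 3
    (x : Fin 3 → R)
    (hreg : RingTheory.Sequence.IsRegular R [x 0, x 1, x 2])
    (hx : Ideal.span {x 0, x 1, x 2} = maximalIdeal R)
    (I : Ideal R) (r : ℕ)
    (n1 n2 n3 : ℕ) (h3 : 0 < n3) (hr1 : r ≤ n1) (hr2 : r ≤ n2)
    (d1 : (Fin n1 → R) →ₗ[R] R) (d2 : (Fin n2 → R) →ₗ[R] (Fin n1 → R))
    (d3 : (Fin n3 → R) →ₗ[R] (Fin n2 → R))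
    -- minimal free resolution of `R/I`
    (hI : LinearMap.range d1 = I)
    (hex1 : LinearMap.ker d1 = LinearMap.range d2)
    (hex2 : LinearMap.ker d2 = LinearMap.range d3)
    (hex3 : LinearMap.ker d3 = ⊥)
    (hmin1 : ∀ v, d1 v ∈ maximalIdeal R)
    (hmin2 : ∀ v, d2 v ∈ maximalIdeal R • (⊤ : Submodule R (Fin n1 → R)))
    (hmin3 : ∀ v, d3 v ∈ maximalIdeal R • (⊤ : Submodule R (Fin n2 → R)))
    -- DG-algebra structure on `F`
    (m11 : (Fin n1 → R) →ₗ[R] (Fin n1 → R) →ₗ[R] (Fin n2 → R))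
    (m12 : (Fin n1 → R) →ₗ[R] (Fin n2 → R) →ₗ[R] (Fin n3 → R))
    (hleib1 : ∀ a b, d2 (m11 a b) = d1 a • b - d1 b • a)
    (halt : ∀ a, m11 a a = 0) (hskew : ∀ a b, m11 a b = - m11 b a)
    (hleib2 : ∀ a z, d3 (m12 a z) = d1 a • z - m11 a (d2 z))
    (hassoc : ∀ a b c, m12 c (m11 a b) = m12 a (m11 b c))
    -- `F` is in standard form of class `G(r)`
    (htabG1 : ∀ a b : Fin n1, m11 (Pi.single a 1) (Pi.single b 1) ∈
      maximalIdeal R • (⊤ : Submodule R (Fin n2 → R)))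
    (htabG2 : ∀ (a : Fin n1) (b : Fin n2),
      m12 (Pi.single a 1) (Pi.single b 1) -
        (if (a : ℕ) = (b : ℕ) ∧ (a : ℕ) < r then Pi.single (⟨0, h3⟩ : Fin n3) 1 else 0) ∈
      maximalIdeal R • (⊤ : Submodule R (Fin n3 → R)))
    -- `F₁ ·_F F₁ ⊆ 𝔪² F₂`
    (hFF : ∀ a b, m11 a b ∈ (maximalIdeal R ^ 2) • (⊤ : Submodule R (Fin n2 → R)))
    -- `d₂(F₂) ⊆ 𝔪² F₁`
    (hquad : ∀ v, d2 v ∈ (maximalIdeal R ^ 2) • (⊤ : Submodule R (Fin n1 → R)))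
    -- an index set
    (σ : Finset (Fin n1)) :
    HasTorClassG R (trimIdeal R (fun i => d1 (Pi.single i 1)) σ)
      (r - ((σ : Set (Fin n1)) ∩ {i | (i : ℕ) < r}).ncard) :=
  trim_quadratic_torclass_G_general
    (F := ⟨d1, d2, d3, m11, m12, LinearMap.exact_iff.2 hex1, LinearMap.exact_iff.2 hex2,
      LinearMap.ker_eq_bot.1 hex3, halt, hleib1, hleib2⟩)
    hreg.toIsWeaklyRegular (by rw [← hx]; congr 1; ext; simp [Fin.exists_fin_succ, eq_comm])
    h3 hr1 hr2 ⟨hmin1, hmin2, hmin3⟩ htabG1 htabG2 hquad σ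
end

section
/- Let (R, 𝔪, k) be a regular local ring of dimension 3, I = (φ_1, …, φ_n) with pd_R(R/I) = 3 of Tor-algebra class H(p,q), and F_• a minimal DG-algebra free resolution of R/I in standard form with f_1^i ·_F f_1^j ∈ 𝔪² F_2 for all i, j ≠ p+1. If moreover d_2(F_2) ⊆ 𝔪² F_1, then for every index set σ = (σ_1 < ⋯ < σ_t) with p+1 ∉ σ, the trimmed ideal tm_σ(I) is either Golod or defines a ring of Tor-algebra class H(p − |σ ∩ [p]|, q). -/
open IsLocalRing

/-!
Trimming replaces each generator `φ_j` with `j ∈ σ` by the generators `x₀φ_j, x₁φ_j, x₂φ_j` of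
`𝔪φ_j`.  Covering the `j`-th summand of `F₁` by a Koszul complex on `x` for every `j ∈ σ`, and
lifting `d₂`, `d₃` and the product of `F` along this cover, yields a DG resolution of the trimmed
ideal whose terms are those of `F` enlarged by Koszul summands.  Its product has the product of `F`
as its component in `F`.  The Koszul component is controlled through its Koszul differential: the
condition `d₂(F₂) ⊆ 𝔪²F₁` puts this differential in `𝔪²`, except for products which are basis
elements modulo `𝔪`, and the Koszul differentials are matrices of linear forms, so an element they
send into `𝔪²` lies in `𝔪` times the Koszul summand.  The same property makes the resolution
minimal.  In the exceptional products the Koszul component is absorbed by a change of basis.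

The new generators are covered by `𝔪F₁` and therefore multiply to zero modulo `𝔪`.  Modulo `𝔪` the
multiplication table thus loses exactly the products of the pivot with the `f₁ⁱ`, `i ∈ σ ∩ [p]`,
while the `q` products landing in degree three survive because the pivot is not trimmed.
-/

open Module

section SMulTop

variable {R M N : Type*} [CommRing R] [AddCommGroup M] [Module R M] [AddCommGroup N] [Module R N]

lemma map_mem_smul_top (I : Ideal R) (f : M →ₗ[R] N) {v : M}
    (hv : v ∈ I • (⊤ : Submodule R M)) : f v ∈ I • (⊤ : Submodule R N) :=
  Submodule.smul_top_le_comap_smul_top I f hv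

lemma map_mem_mul_smul_top {I J : Ideal R} {f : M →ₗ[R] N}
    (hf : ∀ v, f v ∈ J • (⊤ : Submodule R N)) {v : M} (hv : v ∈ I • (⊤ : Submodule R M)) :
    f v ∈ (I * J) • (⊤ : Submodule R N) := by
  have hrange : LinearMap.range f ≤ J • ⊤ := by
    rintro _ ⟨w, rfl⟩
    exact hf w
  have hfv : f v ∈ I • LinearMap.range f := by
    rw [← Submodule.map_top, ← Submodule.map_smul'']
    exact Submodule.mem_map_of_mem hv
  rw [Submodule.mul_smul]
  exact Submodule.smul_mono le_rfl hrange hfv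

lemma prodMk_mem_smul_top {I : Ideal R} {v : M} {w : N} (hv : v ∈ I • (⊤ : Submodule R M))
    (hw : w ∈ I • (⊤ : Submodule R N)) : (v, w) ∈ I • (⊤ : Submodule R (M × N)) := by
  simpa using add_mem (map_mem_smul_top I (LinearMap.inl R M N) hv)
    (map_mem_smul_top I (LinearMap.inr R M N) hw)

lemma mem_smul_top_pi_iff {ι : Type*} [Finite ι] {P : ι → Type*} [∀ i, AddCommGroup (P i)]
    [∀ i, Module R (P i)] {I : Ideal R} {v : ∀ i, P i} :
    v ∈ I • (⊤ : Submodule R (∀ i, P i)) ↔ ∀ i, v i ∈ I • (⊤ : Submodule R (P i)) := by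
  classical
  have := Fintype.ofFinite ι
  refine ⟨fun h i => map_mem_smul_top I (LinearMap.proj i) h, fun h => ?_⟩
  rw [← Finset.univ_sum_single v]
  exact sum_mem fun i _ => map_mem_smul_top I (LinearMap.single R P i) (h i)

lemma mem_smul_top_self_iff {I : Ideal R} {r : R} : r ∈ I • (⊤ : Submodule R R) ↔ r ∈ I := by
  simp

end SMulTop

section Lifting

variable {R A B M N : Type*} [CommRing R] [AddCommGroup A] [Module R A] [AddCommGroup B]
  [Module R B] [AddCommGroup M] [Module R M] [AddCommGroup N] [Module R N]

lemma exists_projective_lift_mem [Projective R A] (f : M →ₗ[R] N) (g : A →ₗ[R] N)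
    (S : Submodule R M) (h : ∀ a, ∃ m ∈ S, f m = g a) :
    ∃ l : A →ₗ[R] M, (∀ a, f (l a) = g a) ∧ ∀ a, l a ∈ S := by
  let g' : A →ₗ[R] LinearMap.range (f.domRestrict S) := g.codRestrict _ fun a => by
    obtain ⟨m, hm, hfm⟩ := h a
    exact ⟨⟨m, hm⟩, hfm⟩
  obtain ⟨l, hl⟩ := projective_lifting_property (f.domRestrict S).rangeRestrict g'
    (LinearMap.surjective_rangeRestrict _)
  exact ⟨S.subtype ∘ₗ l, fun a => congrArg Subtype.val (LinearMap.congr_fun hl a),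
    fun a => (l a).2⟩

lemma exists_alternating_lift [Free R A] (f : M →ₗ[R] N) {g : A →ₗ[R] A →ₗ[R] N} (hg : g.IsAlt)
    (h : ∀ a b, ∃ m, f m = g a b) :
    ∃ l : A →ₗ[R] A →ₗ[R] M, (∀ a b, f (l a b) = g a b) ∧ l.IsAlt := by
  classical
  let b := Free.chooseBasis R A
  let : LinearOrder (Free.ChooseBasisIndex R A) := linearOrderOfSTO WellOrderingRel
  choose m hm using h
  let U : A →ₗ[R] A →ₗ[R] M :=
    b.constr R fun i => b.constr R fun j => if i < j then m (b i) (b j) else 0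
  have hU : ∀ i j, U (b i) (b j) = if i < j then m (b i) (b j) else 0 := fun i j => by
    simp only [U, Basis.constr_basis]
  refine ⟨U - U.flip, fun x y => ?_, fun x => by simp⟩
  have hfU : (U - U.flip).compr₂ f = g := by
    refine LinearMap.ext_basis b b fun i j => ?_
    simp only [LinearMap.compr₂_apply, LinearMap.sub_apply, LinearMap.flip_apply, hU]
    rcases lt_trichotomy i j with hij | rfl | hij
    · simp [hij, hij.not_gt, hm]
    · simp [hg.self_eq_zero]
    · simp [hij, hij.not_gt, hm, hg.neg]
  exact LinearMap.congr_fun₂ hfU x y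

lemma exists_bilinear_lift {f : M →ₗ[R] N} (hf : Function.Injective f) (g : A →ₗ[R] B →ₗ[R] N)
    (h : ∀ a b, ∃ m, f m = g a b) : ∃ l : A →ₗ[R] B →ₗ[R] M, ∀ a b, f (l a b) = g a b := by
  choose m hm using h
  refine ⟨LinearMap.mk₂ R m ?_ ?_ ?_ ?_, hm⟩ <;> intros <;> apply hf <;> simp [hm]

end Lifting

section Bases

variable {R ι ι' κ M N : Type*} [CommRing R] [AddCommGroup M] [Module R M] [AddCommGroup N]
  [Module R N]

lemma exists_linearMap_basis_eq (b : Basis ι R M) (s : κ ↪ ι) (f : κ → N) :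
    ∃ θ : M →ₗ[R] N, ∀ k, θ (b (s k)) = f k :=
  ⟨b.constr R (Function.extend s f 0), fun k => by
    rw [Basis.constr_basis, s.injective.extend_apply]⟩

/-- The basis `(bᵢ, θ bᵢ)`, `(0, b'ⱼ)` of `M × N`: the product basis sheared along `θ`.  Shearing
absorbs the `N`-components of products of basis elements. -/
noncomputable def shearedBasis (b : Basis ι R M) (b' : Basis ι' R N) (θ : M →ₗ[R] N) :
    Basis (ι ⊕ ι') R (M × N) :=
  (b.prod b').map ((LinearEquiv.refl R M).skewProd (LinearEquiv.refl R N) θ)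

lemma shearedBasis_inl (b : Basis ι R M) (b' : Basis ι' R N) (θ : M →ₗ[R] N) (i : ι) :
    shearedBasis b b' θ (Sum.inl i) = (b i, θ (b i)) := by
  simp [shearedBasis, Basis.prod_apply]

lemma shearedBasis_inr (b : Basis ι R M) (b' : Basis ι' R N) (θ : M →ₗ[R] N) (i : ι') :
    shearedBasis b b' θ (Sum.inr i) = (0, b' i) := by
  simp [shearedBasis, Basis.prod_apply]

lemma map_equivFun_eq_basisFun [Finite ι] (b : Basis ι R M) :
    b.map b.equivFun = Pi.basisFun R ι := by
  classical
  ext1 i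
  simp [Finsupp.single_eq_pi_single]

lemma exists_equiv_fin_extending [Finite ι] {k : ℕ} (s : κ ↪ ι) (eκ : κ ≃ Fin k) :
    ∃ (h : k ≤ Nat.card ι) (e : ι ≃ Fin (Nat.card ι)), ∀ i, e (s i) = Fin.castLE h (eκ i) := by
  let s' : Fin k ↪ Fin (Nat.card ι) :=
    eκ.symm.toEmbedding.trans (s.trans (Finite.equivFin ι).toEmbedding)
  have h : k ≤ Nat.card ι := by simpa using Fintype.card_le_of_embedding s'
  have := Equiv.Perm.isMultiplyPretransitive (Fin (Nat.card ι)) k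
  obtain ⟨τ, hτ⟩ := MulAction.exists_smul_eq (Equiv.Perm (Fin (Nat.card ι))) s' (Fin.castLEEmb h)
  refine ⟨h, (Finite.equivFin ι).trans τ, fun i => ?_⟩
  simpa [s'] using DFunLike.congr_fun hτ (eκ i)

end Bases

section Koszul

open RingTheory.Sequence
open scoped Matrix

variable {R : Type*} [CommRing R]

lemma mem_ofList_take_of_mul_mem {rs : List R} (h : IsWeaklyRegular R rs) {i : ℕ}
    (hi : i < rs.length) {r : R} (hr : rs[i] * r ∈ Ideal.ofList (rs.take i)) :
    r ∈ Ideal.ofList (rs.take i) := by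
  have hsmul := (isSMulRegular_quotient_iff_mem_of_smul_mem _ _).1 (h.regular_mod_prev i hi) r
  simp only [smul_eq_mul, Ideal.mul_top] at hsmul
  exact hsmul hr

lemma exact_compLeft {M N P : Type*} [AddCommGroup M] [Module R M] [AddCommGroup N] [Module R N]
    [AddCommGroup P] [Module R P] {f : M →ₗ[R] N} {g : N →ₗ[R] P} (h : Function.Exact f g)
    (ι : Type*) : Function.Exact (f.compLeft ι) (g.compLeft ι) := by
  rw [LinearMap.exact_iff, LinearMap.ker_compLeft, LinearMap.range_compLeft,
    LinearMap.exact_iff.1 h]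

lemma mem_smul_range_iff {M N : Type*} [AddCommGroup M] [Module R M] [AddCommGroup N] [Module R N]
    {I : Ideal R} {f : M →ₗ[R] N} {y : N} :
    y ∈ I • LinearMap.range f ↔ ∃ v ∈ I • (⊤ : Submodule R M), f v = y := by
  rw [← Submodule.map_top, ← Submodule.map_smul'', Submodule.mem_map]

lemma mem_smul_top_span_range {ι : Type*} [Finite ι] (x : ι → R) :
    x ∈ Ideal.span (Set.range x) • (⊤ : Submodule R (ι → R)) :=
  mem_smul_top_pi_iff.2 fun i => mem_smul_top_self_iff.2 (Ideal.subset_span ⟨i, rfl⟩)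

lemma exists_linearCombination_eq_of_mem_sq {ι : Type*} [Fintype ι] {x : ι → R} {y : R}
    (hy : y ∈ Ideal.span (Set.range x) ^ 2) :
    ∃ c ∈ Ideal.span (Set.range x) • (⊤ : Submodule R (ι → R)),
      Fintype.linearCombination R x c = y := by
  rw [← mem_smul_range_iff, Fintype.range_linearCombination]
  rwa [pow_two] at hy

lemma crossProduct_mem_smul_top (x w : Fin 3 → R) :
    x ⨯₃ w ∈ Ideal.span (Set.range x) • (⊤ : Submodule R (Fin 3 → R)) :=
  map_mem_smul_top _ (crossProduct.flip w) (mem_smul_top_span_range x)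

variable {x : Fin 3 → R} (h : IsWeaklyRegular R [x 0, x 1, x 2])
include h

lemma eq_zero_of_isWeaklyRegular {r : R} (hr : x 0 * r = 0) : r = 0 := by
  simpa using mem_ofList_take_of_mul_mem h (i := 0) (by simp) (r := r) (by simpa using hr)

lemma dvd_of_isWeaklyRegular {r : R} (hr : x 0 ∣ x 1 * r) : x 0 ∣ r := by
  simpa [Ideal.mem_span_singleton] using mem_ofList_take_of_mul_mem h (i := 1) (by simp) (r := r)
    (by simpa [Ideal.mem_span_singleton] using hr)

lemma mem_span_pair_of_isWeaklyRegular {r : R} (hr : x 2 * r ∈ Ideal.span {x 0, x 1}) :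
    r ∈ Ideal.span {x 0, x 1} := by
  rw [Ideal.span_insert] at hr ⊢
  simpa using mem_ofList_take_of_mul_mem h (i := 2) (by simp) (r := r) (by simpa using hr)

lemma toSpanSingleton_injective : Function.Injective (LinearMap.toSpanSingleton R _ x) := by
  refine (injective_iff_map_eq_zero _).2 fun r hr => eq_zero_of_isWeaklyRegular h ?_
  simpa [mul_comm] using congrFun hr 0

lemma exact_toSpanSingleton_crossProduct :
    Function.Exact (LinearMap.toSpanSingleton R _ x) (crossProduct x) := by
  refine fun w => ⟨fun hw => ?_, ?_⟩
  · rw [cross_apply] at hw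
    have hw₁ : x 2 * w 0 - x 0 * w 2 = 0 := congrFun hw 1
    have hw₂ : x 0 * w 1 - x 1 * w 0 = 0 := congrFun hw 2
    obtain ⟨r, hr⟩ := dvd_of_isWeaklyRegular h (r := w 0) ⟨w 1, (sub_eq_zero.1 hw₂).symm⟩
    have h₁ : w 1 - x 1 * r = 0 :=
      eq_zero_of_isWeaklyRegular h (by linear_combination hw₂ + x 1 * hr)
    have h₂ : w 2 - x 2 * r = 0 :=
      eq_zero_of_isWeaklyRegular h (by linear_combination -hw₁ + x 2 * hr)
    refine ⟨r, ?_⟩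
    ext i
    fin_cases i
    · exact (mul_comm _ _).trans hr.symm
    · exact (mul_comm _ _).trans (sub_eq_zero.1 h₁).symm
    · exact (mul_comm _ _).trans (sub_eq_zero.1 h₂).symm
  · rintro ⟨r, rfl⟩
    simp

lemma exact_crossProduct_linearCombination :
    Function.Exact (crossProduct x) (Fintype.linearCombination R x) := by
  refine fun v => ⟨fun hv => ?_, ?_⟩
  · simp only [Fintype.linearCombination_apply, Fin.sum_univ_three, smul_eq_mul] at hv
    obtain ⟨a, b, hab⟩ := Ideal.mem_span_pair.1 (mem_span_pair_of_isWeaklyRegular h (r := v 2)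
      (Ideal.mem_span_pair.2 ⟨-v 0, -v 1, by linear_combination -hv⟩))
    obtain ⟨c, hc⟩ := dvd_of_isWeaklyRegular h (r := v 1 + x 2 * b)
      ⟨-(v 0 + x 2 * a), by linear_combination hv + x 2 * hab⟩
    have h₀ : v 0 + x 2 * a + x 1 * c = 0 :=
      eq_zero_of_isWeaklyRegular h (by linear_combination hv + x 2 * hab - x 1 * hc)
    refine ⟨![-b, a, -c], ?_⟩
    ext i
    fin_cases i
    · change x 1 * -c - x 2 * a = v 0
      linear_combination -h₀
    · change x 2 * -b - x 0 * -c = v 1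
      linear_combination -hc
    · change x 0 * a - x 1 * -b = v 2
      linear_combination hab
  · rintro ⟨w, rfl⟩
    rw [Fintype.linearCombination_apply]
    simpa [dotProduct, mul_comm] using dot_self_cross x w

lemma mem_smul_top_of_linearCombination_mem {c : Fin 3 → R}
    (hc : Fintype.linearCombination R x c ∈ Ideal.span (Set.range x) ^ 2) :
    c ∈ Ideal.span (Set.range x) • (⊤ : Submodule R (Fin 3 → R)) := by
  obtain ⟨m, hm, hmc⟩ := exists_linearCombination_eq_of_mem_sq hc
  obtain ⟨w, hw⟩ := (exact_crossProduct_linearCombination h (c - m)).1 (by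
    rw [map_sub, hmc, sub_self])
  rw [← sub_add_cancel c m, ← hw]
  exact add_mem (crossProduct_mem_smul_top x w) hm

lemma mem_of_smul_mem_sq {r : R}
    (hr : r • x ∈ Ideal.span (Set.range x) ^ 2 • (⊤ : Submodule R (Fin 3 → R))) :
    r ∈ Ideal.span (Set.range x) := by
  rw [mem_smul_top_pi_iff] at hr
  have hc := mem_smul_top_of_linearCombination_mem h (c := ![r, 0, 0]) (by
    simpa [Fintype.linearCombination_apply, Fin.sum_univ_three] using hr 0)
  simpa using mem_smul_top_pi_iff.1 hc 0

lemma mem_smul_top_of_crossProduct_mem_sq {k : Fin 3 → R}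
    (hk : x ⨯₃ k ∈ Ideal.span (Set.range x) ^ 2 • (⊤ : Submodule R (Fin 3 → R))) :
    k ∈ Ideal.span (Set.range x) • (⊤ : Submodule R (Fin 3 → R)) := by
  rw [mem_smul_top_pi_iff] at hk
  have hk₀ : x 1 * k 2 - x 2 * k 1 ∈ Ideal.span (Set.range x) ^ 2 :=
    mem_smul_top_self_iff.1 (hk 0)
  have hk₁ : x 2 * k 0 - x 0 * k 2 ∈ Ideal.span (Set.range x) ^ 2 :=
    mem_smul_top_self_iff.1 (hk 1)
  have hc₀ := mem_smul_top_of_linearCombination_mem h (c := ![0, k 2, -k 1]) (by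
    simpa [Fintype.linearCombination_apply, Fin.sum_univ_three, mul_comm, sub_eq_add_neg] using hk₀)
  have hc₁ := mem_smul_top_of_linearCombination_mem h (c := ![-k 2, 0, k 0]) (by
    simpa [Fintype.linearCombination_apply, Fin.sum_univ_three, mul_comm, sub_eq_neg_add] using hk₁)
  rw [mem_smul_top_pi_iff] at hc₀ hc₁ ⊢
  intro a
  fin_cases a
  · simpa using hc₁ 2
  · simpa using hc₀ 2
  · simpa using hc₀ 1

end Koszul

section TrimMap

variable {R : Type*} [CommRing R] {ι : Type*} (x : Fin 3 → R) (σ : Set ι)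

open scoped Classical in
/-- The identity on the coordinates outside `σ`, and `c ↦ ∑ a, c a * x a`, the first differential of
the Koszul complex of `x`, on those in `σ`. -/
noncomputable def trimMap : ((σᶜ : Set ι) → R) × (σ → Fin 3 → R) →ₗ[R] ι → R :=
  LinearMap.pi fun i => if hi : i ∈ σ then
    Fintype.linearCombination R x ∘ₗ LinearMap.proj ⟨i, hi⟩ ∘ₗ LinearMap.snd R _ _
  else LinearMap.proj ⟨i, hi⟩ ∘ₗ LinearMap.fst R _ _

variable {σ}

lemma trimMap_apply_of_mem {i : ι} (hi : i ∈ σ) (z : ((σᶜ : Set ι) → R) × (σ → Fin 3 → R)) :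
    trimMap x σ z i = Fintype.linearCombination R x (z.2 ⟨i, hi⟩) := by
  simp [trimMap, hi]

lemma trimMap_apply_of_notMem {i : ι} (hi : i ∉ σ) (z : ((σᶜ : Set ι) → R) × (σ → Fin 3 → R)) :
    trimMap x σ z i = z.1 ⟨i, hi⟩ := by
  simp [trimMap, hi]

lemma trimMap_eq_iff {z : ((σᶜ : Set ι) → R) × (σ → Fin 3 → R)} {v : ι → R} :
    trimMap x σ z = v ↔ (∀ i : (σᶜ : Set ι), z.1 i = v i) ∧
      ∀ j : σ, Fintype.linearCombination R x (z.2 j) = v j := by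
  refine ⟨?_, fun ⟨hE, hK⟩ => funext fun i => ?_⟩
  · rintro rfl
    exact ⟨fun i => (trimMap_apply_of_notMem x i.2 z).symm,
      fun j => (trimMap_apply_of_mem x j.2 z).symm⟩
  · by_cases hi : i ∈ σ
    · rw [trimMap_apply_of_mem x hi, hK]
    · rw [trimMap_apply_of_notMem x hi, hE]

lemma trimMap_single [Finite ι] (i : (σᶜ : Set ι)) :
    trimMap x σ (Pi.basisFun R _ i, 0) = Pi.basisFun R ι i := by
  classical
  refine (trimMap_eq_iff x).2 ⟨fun i' => ?_, fun j => ?_⟩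
  · simp [Pi.single_apply, Subtype.ext_iff]
  · have hji : (j : ι) ≠ i := fun h => i.2 (h ▸ j.2)
    simp [hji]

lemma mem_range_trimMap_iff (v : ι → R) :
    v ∈ LinearMap.range (trimMap x σ) ↔ ∀ j ∈ σ, v j ∈ Ideal.span (Set.range x) := by
  have hrange : LinearMap.range (Fintype.linearCombination R x) = Ideal.span (Set.range x) :=
    Fintype.range_linearCombination R x
  rw [← hrange]
  refine ⟨?_, fun hv => ?_⟩
  · rintro ⟨z, rfl⟩ j hj
    exact ⟨_, (trimMap_apply_of_mem x hj z).symm⟩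
  · choose c hc using hv
    exact ⟨(fun i => v i, fun j => c j j.2), (trimMap_eq_iff x).2 ⟨fun i => rfl, fun j => hc j j.2⟩⟩

variable {x}

lemma exact_koszul_trimMap (hreg : RingTheory.Sequence.IsWeaklyRegular R [x 0, x 1, x 2]) :
    Function.Exact (LinearMap.inr R ((σᶜ : Set ι) → R) _ ∘ₗ (crossProduct x).compLeft σ)
      (trimMap x σ) := by
  refine fun z => ?_
  have hK : (∀ j, Fintype.linearCombination R x (z.2 j) = 0) ↔
      ∃ k, (crossProduct x).compLeft σ k = z.2 :=
    funext_iff.symm.trans (exact_compLeft (exact_crossProduct_linearCombination hreg) σ z.2)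
  rw [trimMap_eq_iff]
  simp only [Pi.zero_apply, hK]
  refine ⟨fun ⟨hE, k, hk⟩ => ⟨k, Prod.ext (funext hE).symm hk⟩, ?_⟩
  rintro ⟨k, rfl⟩
  exact ⟨fun _ => rfl, k, rfl⟩

variable [Finite ι]

lemma exists_trimMap_eq_of_mem_sq {v : ι → R}
    (hv : v ∈ Ideal.span (Set.range x) ^ 2 • (⊤ : Submodule R (ι → R))) :
    ∃ e ∈ Ideal.span (Set.range x) ^ 2 • (⊤ : Submodule R ((σᶜ : Set ι) → R)),
      ∃ k ∈ Ideal.span (Set.range x) • (⊤ : Submodule R (σ → Fin 3 → R)),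
        trimMap x σ (e, k) = v := by
  rw [mem_smul_top_pi_iff] at hv
  choose c hc hcv using fun i =>
    exists_linearCombination_eq_of_mem_sq (mem_smul_top_self_iff.1 (hv i))
  exact ⟨fun i => v i, mem_smul_top_pi_iff.2 fun i => hv i, fun j => c j,
    mem_smul_top_pi_iff.2 fun j => hc j, (trimMap_eq_iff x).2 ⟨fun i => rfl, fun j => hcv j⟩⟩

end TrimMap

section TrimIdeal

lemma linearMap_mem_of_forall_single {R ι : Type*} [CommRing R] [Finite ι] [DecidableEq ι]
    {f : (ι → R) →ₗ[R] R} {J : Ideal R} {v : ι → R} (h : ∀ i, v i * f (Pi.single i 1) ∈ J) :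
    f v ∈ J := by
  have := Fintype.ofFinite ι
  rw [← Finset.univ_sum_single v, map_sum]
  refine sum_mem fun i _ => ?_
  have hi := h i
  rw [← smul_eq_mul, ← map_smul, ← Pi.single_smul, smul_eq_mul, mul_one] at hi
  exact hi

variable {R : Type} [CommRing R] [IsLocalRing R] {n : ℕ} (f : (Fin n → R) →ₗ[R] R)

lemma trimIdeal_empty :
    trimIdeal R (fun i => f (Pi.single i 1)) ∅ = LinearMap.range f := by
  rw [← Submodule.map_top, ← (Pi.basisFun R (Fin n)).span_eq, Submodule.map_span, ← Set.range_comp]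
  simp [trimIdeal, Function.comp_def]

lemma range_comp_trimMap {x : Fin 3 → R} (hx : Ideal.span (Set.range x) = maximalIdeal R)
    (σ : Finset (Fin n)) :
    LinearMap.range (f ∘ₗ trimMap x (σ : Set (Fin n))) =
      trimIdeal R (fun i => f (Pi.single i 1)) σ := by
  have mem_range_comp_of {v : Fin n → R} (hv : ∀ j ∈ σ, v j ∈ maximalIdeal R) :
      f v ∈ LinearMap.range (f ∘ₗ trimMap x (σ : Set (Fin n))) := by
    rw [LinearMap.range_comp]
    exact Submodule.mem_map_of_mem ((mem_range_trimMap_iff x v).2 (hx ▸ hv))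
  apply le_antisymm
  · rintro _ ⟨z, rfl⟩
    refine linearMap_mem_of_forall_single fun i => ?_
    by_cases hi : i ∈ σ
    · refine Ideal.mem_sup_right (Ideal.mul_mem_mul ?_ (Ideal.subset_span ⟨i, hi, rfl⟩))
      exact hx ▸ (mem_range_trimMap_iff x _).1 ⟨z, rfl⟩ i hi
    · exact Ideal.mul_mem_left _ _ (Ideal.mem_sup_left (Ideal.subset_span ⟨i, hi, rfl⟩))
  · refine sup_le (Ideal.span_le.2 ?_) (Ideal.mul_le.2 fun m hm y hy => ?_)
    · rintro _ ⟨i, hi, rfl⟩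
      refine mem_range_comp_of fun j hj => ?_
      rw [Pi.single_eq_of_ne (ne_of_mem_of_not_mem hj hi)]
      exact zero_mem _
    · have hspan : Ideal.span ((fun i => f (Pi.single i 1)) '' {i | i ∈ σ}) ≤ LinearMap.range f :=
        Ideal.span_le.2 (by rintro _ ⟨i, -, rfl⟩; exact ⟨_, rfl⟩)
      obtain ⟨v, rfl⟩ := hspan hy
      rw [← smul_eq_mul, ← map_smul]
      exact mem_range_comp_of fun j _ => Ideal.mul_mem_right _ _ hm

end TrimIdeal

section NormalFormIndices

/-- The embedding `Option (Fin p) ↪ Fin n` onto the first `p + 1` indices, `none` being sent to the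
pivot index `p`. -/
def pivotEmb {p n : ℕ} (hp : p < n) : Option (Fin p) ↪ Fin n :=
  finSuccEquivLast.symm.toEmbedding.trans (Fin.castLEEmb hp)

lemma pivotEmb_none {p n : ℕ} (hp : p < n) : pivotEmb hp none = ⟨p, hp⟩ := by
  ext; simp [pivotEmb]

lemma pivotEmb_some {p n : ℕ} (hp : p < n) (i : Fin p) :
    pivotEmb hp (some i) = Fin.castLE hp.le i := by
  ext; simp [pivotEmb]

lemma eq_pivotEmb_none_iff {p n : ℕ} (hp : p < n) (a : Fin n) :
    a = pivotEmb hp none ↔ (a : ℕ) = p := by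
  simp [pivotEmb_none, Fin.ext_iff]

lemma exists_eq_pivotEmb_some_iff {p n : ℕ} (hp : p < n) (a : Fin n) :
    (∃ i, a = pivotEmb hp (some i)) ↔ (a : ℕ) < p := by
  simp only [pivotEmb_some]
  exact ⟨fun ⟨i, hi⟩ => hi ▸ i.2, fun ha => ⟨⟨a, ha⟩, rfl⟩⟩

lemma card_pivotEmb_notMem {p n : ℕ} (hp : p < n) (σ : Set (Fin n)) :
    Nat.card {k // pivotEmb hp (some k) ∉ σ} = p - (σ ∩ {i | (i : ℕ) < p}).ncard := by
  let s : Fin p → Fin n := fun k => pivotEmb hp (some k)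
  have hs : Function.Injective s := (pivotEmb hp).injective.comp (Option.some_injective _)
  have himage : σ ∩ {i | (i : ℕ) < p} = s '' (s ⁻¹' σ) := by
    rw [Set.image_preimage_eq_inter_range]
    congr 1
    ext i
    simp only [Set.mem_ofPred_eq, ← exists_eq_pivotEmb_some_iff hp, Set.mem_range, s, eq_comm]
  rw [himage, Set.ncard_image_of_injective _ hs]
  exact (Nat.card_coe_set_eq (s ⁻¹' σ)ᶜ).trans ((Set.ncard_compl _).trans (by rw [Nat.card_fin]))

lemma exists_eq_castLE_natAdd_iff {p q n : ℕ} (hpq : p + q ≤ n) (c : Fin n) :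
    (∃ j : Fin q, c = Fin.castLE hpq (Fin.natAdd p j)) ↔ p ≤ (c : ℕ) ∧ (c : ℕ) < p + q := by
  refine ⟨?_, fun hc => ⟨⟨c - p, by omega⟩, Fin.ext (by simp [hc.1])⟩⟩
  rintro ⟨j, rfl⟩
  simp

end NormalFormIndices

section DGResolutions

variable {R : Type*} [CommRing R] [IsLocalRing R]

local notation "𝔪" => maximalIdeal R

/-- A DG-algebra structure on a minimal free resolution `0 → M₃ → M₂ → M₁ → R` of the cyclic module
`R ⧸ range d₁`.  Graded commutativity in degree `1 + 1` is `mul₁₁_self`; the product of degrees `2`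
and `1` is defined from `mul₁₂` by commutativity, so that associativity is a consequence
(`mul₁₂_assoc`). -/
structure MinimalDGResolution (R : Type*) [CommRing R] [IsLocalRing R] (M₁ M₂ M₃ : Type*)
    [AddCommGroup M₁] [Module R M₁] [AddCommGroup M₂] [Module R M₂] [AddCommGroup M₃]
    [Module R M₃] where
  d₁ : M₁ →ₗ[R] R
  d₂ : M₂ →ₗ[R] M₁
  d₃ : M₃ →ₗ[R] M₂
  exact₁ : Function.Exact d₂ d₁
  exact₂ : Function.Exact d₃ d₂
  injective₃ : Function.Injective d₃
  d₁_mem : ∀ v, d₁ v ∈ maximalIdeal R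
  d₂_mem : ∀ v, d₂ v ∈ maximalIdeal R • (⊤ : Submodule R M₁)
  d₃_mem : ∀ v, d₃ v ∈ maximalIdeal R • (⊤ : Submodule R M₂)
  mul₁₁ : M₁ →ₗ[R] M₁ →ₗ[R] M₂
  mul₁₂ : M₁ →ₗ[R] M₂ →ₗ[R] M₃
  d₂_mul₁₁ : ∀ a b, d₂ (mul₁₁ a b) = d₁ a • b - d₁ b • a
  mul₁₁_self : ∀ a, mul₁₁ a a = 0
  d₃_mul₁₂ : ∀ a z, d₃ (mul₁₂ a z) = d₁ a • z - mul₁₁ a (d₂ z)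

namespace MinimalDGResolution

variable {M₁ M₂ M₃ N₁ N₂ N₃ : Type*} [AddCommGroup M₁] [Module R M₁] [AddCommGroup M₂]
  [Module R M₂] [AddCommGroup M₃] [Module R M₃] [AddCommGroup N₁] [Module R N₁]
  [AddCommGroup N₂] [Module R N₂] [AddCommGroup N₃] [Module R N₃]
  (F : MinimalDGResolution R M₁ M₂ M₃)

lemma mul₁₁_skew (a b : M₁) : F.mul₁₁ a b = -F.mul₁₁ b a :=
  (LinearMap.IsAlt.neg F.mul₁₁_self b a).symm

lemma mul₁₂_assoc (a b c : M₁) : F.mul₁₂ c (F.mul₁₁ a b) = F.mul₁₂ a (F.mul₁₁ b c) := by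
  apply F.injective₃
  simp only [F.d₃_mul₁₂, F.d₂_mul₁₁, map_sub, map_smul]
  rw [F.mul₁₁_skew c a, F.mul₁₁_skew c b]
  module

/-- Transport of a DG resolution along isomorphisms of its terms. -/
def congr (ε₁ : M₁ ≃ₗ[R] N₁) (ε₂ : M₂ ≃ₗ[R] N₂) (ε₃ : M₃ ≃ₗ[R] N₃) :
    MinimalDGResolution R N₁ N₂ N₃ where
  d₁ := F.d₁ ∘ₗ ε₁.symm
  d₂ := ε₁ ∘ₗ F.d₂ ∘ₗ ε₂.symm
  d₃ := ε₂ ∘ₗ F.d₃ ∘ₗ ε₃.symm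
  exact₁ := (Function.Exact.iff_of_ladder_linearEquiv (e₁ := ε₂) (e₂ := ε₁)
    (e₃ := LinearEquiv.refl R R) (by ext; simp) (by ext; simp)).2 F.exact₁
  exact₂ := (Function.Exact.iff_of_ladder_linearEquiv (e₁ := ε₃) (e₂ := ε₂) (e₃ := ε₁)
    (by ext; simp) (by ext; simp)).2 F.exact₂
  injective₃ := ε₂.injective.comp (F.injective₃.comp ε₃.symm.injective)
  d₁_mem v := F.d₁_mem _
  d₂_mem v := map_mem_smul_top 𝔪 ε₁.toLinearMap (F.d₂_mem _)
  d₃_mem v := map_mem_smul_top 𝔪 ε₂.toLinearMap (F.d₃_mem _)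
  mul₁₁ := (F.mul₁₁.compl₁₂ ε₁.symm.toLinearMap ε₁.symm.toLinearMap).compr₂ ε₂.toLinearMap
  mul₁₂ := (F.mul₁₂.compl₁₂ ε₁.symm.toLinearMap ε₂.symm.toLinearMap).compr₂ ε₃.toLinearMap
  d₂_mul₁₁ a b := by simp [F.d₂_mul₁₁]
  mul₁₁_self a := by simp [F.mul₁₁_self]
  d₃_mul₁₂ a z := by simp [F.d₃_mul₁₂]

lemma range_congr_d₁ (ε₁ : M₁ ≃ₗ[R] N₁) (ε₂ : M₂ ≃ₗ[R] N₂) (ε₃ : M₃ ≃ₗ[R] N₃) :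
    LinearMap.range (F.congr ε₁ ε₂ ε₃).d₁ = LinearMap.range F.d₁ :=
  LinearMap.range_comp_of_range_eq_top _ ε₁.symm.range

variable {ι₁ ι₂ ι₃ κ₁ κ₂ κ₃ P Q P' Q' : Type*}

/-- Modulo `𝔪`, the products of the basis elements are in the normal form of class `H`.  The
distinguished basis elements are picked out by embeddings: `u none` is the pivot index `p + 1` and
`u (some i)`, `v (inl i)`, `v (inr j)`, `w j` are the indices of `f₁ⁱ`, `f₂ⁱ`, `f₂^{p+j}`, `f₃ʲ`. -/
structure IsStandardH (b₁ : Basis ι₁ R M₁) (b₂ : Basis ι₂ R M₂) (b₃ : Basis ι₃ R M₃)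
    (u : Option P ↪ ι₁) (v : P ⊕ Q ↪ ι₂) (w : Q ↪ ι₃) : Prop where
  mul₁₁_pivot : ∀ i, F.mul₁₁ (b₁ (u none)) (b₁ (u (some i))) - b₂ (v (.inl i)) ∈
    𝔪 • (⊤ : Submodule R M₂)
  mul₁₁_other : ∀ a b, ¬(a = u none ∧ ∃ i, b = u (some i)) → ¬(b = u none ∧ ∃ i, a = u (some i)) →
    F.mul₁₁ (b₁ a) (b₁ b) ∈ 𝔪 • (⊤ : Submodule R M₂)
  mul₁₂_pivot : ∀ j, F.mul₁₂ (b₁ (u none)) (b₂ (v (.inr j))) - b₃ (w j) ∈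
    𝔪 • (⊤ : Submodule R M₃)
  mul₁₂_other : ∀ a c, ¬(a = u none ∧ ∃ j, c = v (.inr j)) →
    F.mul₁₂ (b₁ a) (b₂ c) ∈ 𝔪 • (⊤ : Submodule R M₃)

namespace IsStandardH

variable {F} {b₁ : Basis ι₁ R M₁} {b₂ : Basis ι₂ R M₂} {b₃ : Basis ι₃ R M₃}
  {u : Option P ↪ ι₁} {v : P ⊕ Q ↪ ι₂} {w : Q ↪ ι₃}

lemma congr (h : F.IsStandardH b₁ b₂ b₃ u v w) (ε₁ : M₁ ≃ₗ[R] N₁) (ε₂ : M₂ ≃ₗ[R] N₂)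
    (ε₃ : M₃ ≃ₗ[R] N₃) :
    (F.congr ε₁ ε₂ ε₃).IsStandardH (b₁.map ε₁) (b₂.map ε₂) (b₃.map ε₃) u v w where
  mul₁₁_pivot i := by
    simpa [MinimalDGResolution.congr] using
      map_mem_smul_top 𝔪 ε₂.toLinearMap (h.mul₁₁_pivot i)
  mul₁₁_other a b hab hba := by
    simpa [MinimalDGResolution.congr] using
      map_mem_smul_top 𝔪 ε₂.toLinearMap (h.mul₁₁_other a b hab hba)
  mul₁₂_pivot j := by
    simpa [MinimalDGResolution.congr] using
      map_mem_smul_top 𝔪 ε₃.toLinearMap (h.mul₁₂_pivot j)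
  mul₁₂_other a c hac := by
    simpa [MinimalDGResolution.congr] using
      map_mem_smul_top 𝔪 ε₃.toLinearMap (h.mul₁₂_other a c hac)

lemma reindex (h : F.IsStandardH b₁ b₂ b₃ u v w) (eP : P ≃ P') (eQ : Q ≃ Q') {e₁ : ι₁ ≃ κ₁}
    {e₂ : ι₂ ≃ κ₂} {e₃ : ι₃ ≃ κ₃} {u' : Option P' ↪ κ₁} {v' : P' ⊕ Q' ↪ κ₂} {w' : Q' ↪ κ₃}
    (hu : ∀ o, e₁ (u o) = u' (o.map eP)) (hv : ∀ s, e₂ (v s) = v' (s.map eP eQ))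
    (hw : ∀ j, e₃ (w j) = w' (eQ j)) :
    F.IsStandardH (b₁.reindex e₁) (b₂.reindex e₂) (b₃.reindex e₃) u' v' w' := by
  have hu_none : e₁.symm (u' none) = u none := e₁.symm_apply_eq.2 (hu none).symm
  have hu_some : ∀ i, e₁.symm (u' (some (eP i))) = u (some i) := fun i =>
    e₁.symm_apply_eq.2 (hu (some i)).symm
  have hv_inl : ∀ i, e₂.symm (v' (.inl (eP i))) = v (.inl i) := fun i =>
    e₂.symm_apply_eq.2 (hv (.inl i)).symm
  have hv_inr : ∀ j, e₂.symm (v' (.inr (eQ j))) = v (.inr j) := fun j =>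
    e₂.symm_apply_eq.2 (hv (.inr j)).symm
  have hw' : ∀ j, e₃.symm (w' (eQ j)) = w j := fun j => e₃.symm_apply_eq.2 (hw j).symm
  have of_symm_none {a : κ₁} (ha : e₁.symm a = u none) : a = u' none :=
    (e₁.symm_apply_eq.1 ha).trans (hu none)
  have of_symm_some {a : κ₁} (i : P) (ha : e₁.symm a = u (some i)) : a = u' (some (eP i)) :=
    (e₁.symm_apply_eq.1 ha).trans (hu (some i))
  refine ⟨eP.forall_congr_right.1 fun i => ?_, fun a b hab hba => ?_,
    eQ.forall_congr_right.1 fun j => ?_, fun a c hac => ?_⟩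
  · simpa only [Basis.reindex_apply, hu_none, hu_some, hv_inl] using h.mul₁₁_pivot i
  · rw [Basis.reindex_apply, Basis.reindex_apply]
    exact h.mul₁₁_other _ _
      (fun ⟨ha, i, hb⟩ => hab ⟨of_symm_none ha, eP i, of_symm_some i hb⟩)
      (fun ⟨hb, i, ha⟩ => hba ⟨of_symm_none hb, eP i, of_symm_some i ha⟩)
  · simpa only [Basis.reindex_apply, hu_none, hv_inr, hw'] using h.mul₁₂_pivot j
  · rw [Basis.reindex_apply, Basis.reindex_apply]
    exact h.mul₁₂_other _ _ fun ⟨ha, j, hc⟩ =>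
      hac ⟨of_symm_none ha, eQ j, (e₂.symm_apply_eq.1 hc).trans (hv (.inr j))⟩

end IsStandardH

lemma isStandardH_basisFun_iff {p q n₁ n₂ n₃ : ℕ} (hp : p < n₁) (hpq : p + q ≤ n₂) (hq : q ≤ n₃)
    (F : MinimalDGResolution R (Fin n₁ → R) (Fin n₂ → R) (Fin n₃ → R)) :
    F.IsStandardH (Pi.basisFun R _) (Pi.basisFun R _) (Pi.basisFun R _) (pivotEmb hp)
        (finSumFinEquiv.toEmbedding.trans (Fin.castLEEmb hpq)) (Fin.castLEEmb hq) ↔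
      (∀ b : Fin n₁, ∀ hb : (b : ℕ) < p,
        F.mul₁₁ (Pi.single (⟨p, hp⟩ : Fin n₁) 1) (Pi.single b 1) -
          Pi.single (⟨(b : ℕ), by omega⟩ : Fin n₂) 1 ∈ 𝔪 • (⊤ : Submodule R (Fin n₂ → R))) ∧
      (∀ a b : Fin n₁, ¬((a : ℕ) = p ∧ (b : ℕ) < p) → ¬((b : ℕ) = p ∧ (a : ℕ) < p) →
        F.mul₁₁ (Pi.single a 1) (Pi.single b 1) ∈ 𝔪 • (⊤ : Submodule R (Fin n₂ → R))) ∧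
      (∀ b : Fin n₂, ∀ _ : p ≤ (b : ℕ), ∀ _ : (b : ℕ) < p + q,
        F.mul₁₂ (Pi.single (⟨p, hp⟩ : Fin n₁) 1) (Pi.single b 1) -
          Pi.single (⟨(b : ℕ) - p, by omega⟩ : Fin n₃) 1 ∈ 𝔪 • (⊤ : Submodule R (Fin n₃ → R))) ∧
      (∀ (a : Fin n₁) (b : Fin n₂), ¬((a : ℕ) = p ∧ p ≤ (b : ℕ) ∧ (b : ℕ) < p + q) →
        F.mul₁₂ (Pi.single a 1) (Pi.single b 1) ∈ 𝔪 • (⊤ : Submodule R (Fin n₃ → R))) := by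
  have sub_p (j : Fin q) (hj : (Fin.castLE hpq (Fin.natAdd p j) : ℕ) - p < n₃) :
      (⟨_, hj⟩ : Fin n₃) = Fin.castLE hq j := by
    simp [Fin.ext_iff]
  constructor
  · intro h
    refine ⟨fun b hb => ?_, fun a b hab hba => ?_, fun c hc₁ hc₂ => ?_, fun a c hac => ?_⟩
    · have hpivot := h.mul₁₁_pivot ⟨b, hb⟩
      simp only [Pi.basisFun_apply, pivotEmb_none, pivotEmb_some] at hpivot
      exact hpivot
    · simpa only [Pi.basisFun_apply] using
        h.mul₁₁_other a b (by rwa [eq_pivotEmb_none_iff, exists_eq_pivotEmb_some_iff])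
          (by rwa [eq_pivotEmb_none_iff, exists_eq_pivotEmb_some_iff])
    · obtain ⟨j, rfl⟩ := (exists_eq_castLE_natAdd_iff hpq c).2 ⟨hc₁, hc₂⟩
      have hpivot := h.mul₁₂_pivot j
      simp only [Pi.basisFun_apply, pivotEmb_none] at hpivot
      rw [sub_p]
      exact hpivot
    · simpa only [Pi.basisFun_apply] using
        h.mul₁₂_other a c fun ⟨ha, hc⟩ =>
          hac ⟨(eq_pivotEmb_none_iff hp a).1 ha, (exists_eq_castLE_natAdd_iff hpq c).1 hc⟩
  · rintro ⟨table₁, table₂, table₃, table₄⟩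
    refine ⟨fun i => ?_, fun a b hab hba => ?_, fun j => ?_, fun a c hac => ?_⟩
    · simp only [Pi.basisFun_apply, pivotEmb_none, pivotEmb_some]
      exact table₁ _ i.2
    · rw [eq_pivotEmb_none_iff, exists_eq_pivotEmb_some_iff] at hab hba
      simpa only [Pi.basisFun_apply] using table₂ a b hab hba
    · simp only [Pi.basisFun_apply, pivotEmb_none]
      have hpivot := table₃ (Fin.castLE hpq (Fin.natAdd p j)) (by simp) (by simp)
      rwa [sub_p] at hpivot
    · simpa only [Pi.basisFun_apply] using
        table₄ a c fun ⟨ha, hc⟩ =>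
          hac ⟨(eq_pivotEmb_none_iff hp a).2 ha, (exists_eq_castLE_natAdd_iff hpq c).2 hc⟩

lemma IsStandardH.hasTorClassH {R : Type} [CommRing R] [IsLocalRing R] {M₁ M₂ M₃ : Type*}
    [AddCommGroup M₁] [Module R M₁] [AddCommGroup M₂] [Module R M₂] [AddCommGroup M₃] [Module R M₃]
    {F : MinimalDGResolution R M₁ M₂ M₃} [Finite ι₁] [Finite ι₂] [Finite ι₃] [Finite P] [Finite Q]
    {b₁ : Basis ι₁ R M₁} {b₂ : Basis ι₂ R M₂} {b₃ : Basis ι₃ R M₃} {u : Option P ↪ ι₁}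
    {v : P ⊕ Q ↪ ι₂} {w : Q ↪ ι₃} (h : F.IsStandardH b₁ b₂ b₃ u v w) :
    HasTorClassH R (LinearMap.range F.d₁) (Nat.card P) (Nat.card Q) := by
  let eP := Finite.equivFin P
  let eQ := Finite.equivFin Q
  obtain ⟨hp, e₁, he₁⟩ :=
    exists_equiv_fin_extending u ((Equiv.optionCongr eP).trans finSuccEquivLast.symm)
  obtain ⟨hpq, e₂, he₂⟩ :=
    exists_equiv_fin_extending v ((Equiv.sumCongr eP eQ).trans finSumFinEquiv)
  obtain ⟨hq, e₃, he₃⟩ := exists_equiv_fin_extending w eQ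
  have hG := (h.reindex eP eQ (u' := pivotEmb hp)
    (v' := finSumFinEquiv.toEmbedding.trans (Fin.castLEEmb hpq)) (w' := Fin.castLEEmb hq)
    he₁ he₂ he₃).congr (b₁.reindex e₁).equivFun (b₂.reindex e₂).equivFun (b₃.reindex e₃).equivFun
  simp only [map_equivFun_eq_basisFun] at hG
  obtain ⟨table₁, table₂, table₃, table₄⟩ := (isStandardH_basisFun_iff hp hpq hq _).1 hG
  exact ⟨_, _, _, hp, hpq, hq, _, _, _, _, _, F.range_congr_d₁ _ _ _,
    LinearMap.exact_iff.1 (exact₁ _), LinearMap.exact_iff.1 (exact₂ _),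
    LinearMap.ker_eq_bot.2 (injective₃ _), d₁_mem _, d₂_mem _, d₃_mem _, d₂_mul₁₁ _, mul₁₁_self _,
    mul₁₁_skew _, d₃_mul₁₂ _, mul₁₂_assoc _, table₁, table₂, table₃, table₄⟩

end MinimalDGResolution

/-- A free cover `π : E × K₁ → M₁` whose kernel lies in `K₁` and has a resolution
`0 → K₃ → K₂ → K₁` by matrices of linear forms, expressed by the two `reflects` fields.  Trimming
replaces the summands of `M₁` indexed by `σ` with copies of `𝔪`, and these are covered in this way
by Koszul complexes. -/
structure LinearCover (R : Type*) [CommRing R] [IsLocalRing R] (E K₁ K₂ K₃ M₁ : Type*)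
    [AddCommGroup E] [Module R E] [AddCommGroup K₁] [Module R K₁] [AddCommGroup K₂] [Module R K₂]
    [AddCommGroup K₃] [Module R K₃] [AddCommGroup M₁] [Module R M₁] where
  π : E × K₁ →ₗ[R] M₁
  δ₂ : K₂ →ₗ[R] K₁
  δ₃ : K₃ →ₗ[R] K₂
  exact₁ : Function.Exact (LinearMap.inr R E K₁ ∘ₗ δ₂) π
  exact₂ : Function.Exact δ₃ δ₂
  injective₃ : Function.Injective δ₃
  π_inr_mem : ∀ k, π (0, k) ∈ maximalIdeal R • (⊤ : Submodule R M₁)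
  δ₂_mem : ∀ k, δ₂ k ∈ maximalIdeal R • (⊤ : Submodule R K₁)
  δ₃_mem : ∀ k, δ₃ k ∈ maximalIdeal R • (⊤ : Submodule R K₂)
  δ₂_reflects : ∀ k, δ₂ k ∈ maximalIdeal R ^ 2 • (⊤ : Submodule R K₁) →
    k ∈ maximalIdeal R • (⊤ : Submodule R K₂)
  δ₃_reflects : ∀ k, δ₃ k ∈ maximalIdeal R ^ 2 • (⊤ : Submodule R K₂) →
    k ∈ maximalIdeal R • (⊤ : Submodule R K₃)
  exists_lift : ∀ v ∈ maximalIdeal R ^ 2 • (⊤ : Submodule R M₁),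
    ∃ e ∈ maximalIdeal R ^ 2 • (⊤ : Submodule R E),
      ∃ k ∈ maximalIdeal R • (⊤ : Submodule R K₁), π (e, k) = v

variable {E K₁ K₂ K₃ M₁ M₂ M₃ : Type*} [AddCommGroup E] [Module R E]
  [AddCommGroup K₁] [Module R K₁] [AddCommGroup K₂] [Module R K₂] [AddCommGroup K₃] [Module R K₃]
  [AddCommGroup M₁] [Module R M₁] [AddCommGroup M₂] [Module R M₂] [AddCommGroup M₃] [Module R M₃]

/-- The lifts along a linear cover from which the trimmed resolution is built: `β` lifts `d₂`, `γ`
lifts the null-homotopy of `β ∘ d₃`, and `κ` corrects the product `β (πa · πb)`. -/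
structure TrimLift (F : MinimalDGResolution R M₁ M₂ M₃) (C : LinearCover R E K₁ K₂ K₃ M₁) where
  β : M₂ →ₗ[R] E × K₁
  γ : M₃ →ₗ[R] K₂
  κ : E × K₁ →ₗ[R] E × K₁ →ₗ[R] K₂
  π_β : ∀ f, C.π (β f) = F.d₂ f
  β_fst_mem : ∀ f, (β f).1 ∈ maximalIdeal R ^ 2 • (⊤ : Submodule R E)
  β_snd_mem : ∀ f, (β f).2 ∈ maximalIdeal R • (⊤ : Submodule R K₁)
  δ₂_γ : ∀ g, (0, C.δ₂ (γ g)) = -β (F.d₃ g)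
  δ₂_κ : ∀ a b, (0, C.δ₂ (κ a b)) =
    F.d₁ (C.π a) • b - F.d₁ (C.π b) • a - β (F.mul₁₁ (C.π a) (C.π b))
  κ_self : ∀ a, κ a a = 0

namespace TrimLift

variable {F : MinimalDGResolution R M₁ M₂ M₃} {C : LinearCover R E K₁ K₂ K₃ M₁}

lemma nonempty [Free R E] [Free R K₁] [Projective R M₂] [Projective R M₃]
    (hquad : ∀ v, F.d₂ v ∈ 𝔪 ^ 2 • (⊤ : Submodule R M₁)) : Nonempty (TrimLift F C) := by
  have lift_ker (v : E × K₁) (hv : C.π v = 0) : ∃ k, (LinearMap.inr R E K₁ ∘ₗ C.δ₂) k = v :=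
    (C.exact₁ v).1 hv
  obtain ⟨β, π_β, β_mem⟩ := exists_projective_lift_mem C.π F.d₂
    ((𝔪 ^ 2 • (⊤ : Submodule R E)).prod (𝔪 • (⊤ : Submodule R K₁))) fun f => by
      obtain ⟨e, he, k, hk, hek⟩ := C.exists_lift _ (hquad f)
      exact ⟨(e, k), ⟨he, hk⟩, hek⟩
  obtain ⟨γ, δ₂_γ, -⟩ := exists_projective_lift_mem (LinearMap.inr R E K₁ ∘ₗ C.δ₂)
    (-(β ∘ₗ F.d₃)) ⊤ fun g => by
      obtain ⟨k, hk⟩ := lift_ker (-(β (F.d₃ g))) (by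
        rw [map_neg, π_β, F.exact₂.apply_apply_eq_zero, neg_zero])
      exact ⟨k, trivial, hk⟩
  let ρ : E × K₁ →ₗ[R] E × K₁ →ₗ[R] E × K₁ :=
    LinearMap.lsmul R (E × K₁) ∘ₗ F.d₁ ∘ₗ C.π - (LinearMap.lsmul R (E × K₁) ∘ₗ F.d₁ ∘ₗ C.π).flip -
      (F.mul₁₁.compl₁₂ C.π C.π).compr₂ β
  obtain ⟨κ, δ₂_κ, κ_self⟩ := exists_alternating_lift (LinearMap.inr R E K₁ ∘ₗ C.δ₂) (g := ρ)
    (fun a => by simp [ρ, F.mul₁₁_self])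
    fun a b => lift_ker _ (by simp [ρ, π_β, F.d₂_mul₁₁])
  exact ⟨⟨β, γ, κ, π_β, fun f => (β_mem f).1, fun f => (β_mem f).2, δ₂_γ, δ₂_κ, κ_self⟩⟩

variable (T : TrimLift F C)

lemma β_mem (f : M₂) : T.β f ∈ 𝔪 • (⊤ : Submodule R (E × K₁)) :=
  prodMk_mem_smul_top
    (Submodule.smul_mono_left (Ideal.pow_le_self two_ne_zero) (T.β_fst_mem f)) (T.β_snd_mem f)

lemma β_mem_sq {f : M₂} (hf : f ∈ 𝔪 • (⊤ : Submodule R M₂)) :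
    T.β f ∈ 𝔪 ^ 2 • (⊤ : Submodule R (E × K₁)) :=
  pow_two 𝔪 ▸ map_mem_mul_smul_top T.β_mem hf

lemma γ_mem (g : M₃) : T.γ g ∈ 𝔪 • (⊤ : Submodule R K₂) := by
  apply C.δ₂_reflects
  have hmem : (0, C.δ₂ (T.γ g)) ∈ 𝔪 ^ 2 • (⊤ : Submodule R (E × K₁)) :=
    T.δ₂_γ g ▸ neg_mem (T.β_mem_sq (F.d₃_mem g))
  exact map_mem_smul_top _ (LinearMap.snd R E K₁) hmem

/-- The second differential of the trimmed resolution. -/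
def d₂ : M₂ × K₂ →ₗ[R] E × K₁ :=
  T.β.coprod (LinearMap.inr R E K₁ ∘ₗ C.δ₂)

/-- The third differential of the trimmed resolution. -/
def d₃ : M₃ × K₃ →ₗ[R] M₂ × K₂ :=
  (F.d₃ ∘ₗ LinearMap.fst R M₃ K₃).prod (T.γ.coprod C.δ₃)

/-- The product in degrees `1 + 1` of the trimmed resolution. -/
def mul₁₁ : E × K₁ →ₗ[R] E × K₁ →ₗ[R] M₂ × K₂ :=
  (F.mul₁₁.compl₁₂ C.π C.π).compr₂ (LinearMap.inl R M₂ K₂) + T.κ.compr₂ (LinearMap.inr R M₂ K₂)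

lemma d₂_apply (z : M₂ × K₂) : T.d₂ z = T.β z.1 + (0, C.δ₂ z.2) := rfl

lemma d₃_apply (z : M₃ × K₃) : T.d₃ z = (F.d₃ z.1, T.γ z.1 + C.δ₃ z.2) := rfl

lemma mul₁₁_apply (a b : E × K₁) : T.mul₁₁ a b = (F.mul₁₁ (C.π a) (C.π b), T.κ a b) := by
  simp [mul₁₁]

lemma π_d₂ (z : M₂ × K₂) : C.π (T.d₂ z) = F.d₂ z.1 := by
  have hker : C.π (0, C.δ₂ z.2) = 0 := C.exact₁.apply_apply_eq_zero z.2
  rw [d₂_apply, map_add, T.π_β, hker, add_zero]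

lemma exact_d₂_d₁ : Function.Exact T.d₂ (F.d₁ ∘ₗ C.π) := by
  refine fun v => ⟨fun hv => ?_, ?_⟩
  · obtain ⟨f, hf⟩ := (F.exact₁ _).1 hv
    obtain ⟨k, hk⟩ := (C.exact₁ (v - T.β f)).1 (by rw [map_sub, T.π_β, hf, sub_self])
    exact ⟨(f, k), by rw [d₂_apply]; exact add_eq_of_eq_sub' hk⟩
  · rintro ⟨z, rfl⟩
    rw [LinearMap.comp_apply, π_d₂, F.exact₁.apply_apply_eq_zero]

lemma exact_d₃_d₂ : Function.Exact T.d₃ T.d₂ := by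
  refine fun z => ⟨fun hz => ?_, ?_⟩
  · have hz₁ : F.d₂ z.1 = 0 := by rw [← T.π_d₂, hz, map_zero]
    obtain ⟨g, hg⟩ := (F.exact₂ _).1 hz₁
    have hz₂ : C.δ₂ (z.2 - T.γ g) = 0 := by
      have hsum : ((0, C.δ₂ (z.2 - T.γ g)) : E × K₁) = 0 := by
        rw [← hz, d₂_apply, ← hg, ← neg_neg (T.β _), ← T.δ₂_γ]
        simp [sub_eq_neg_add]
      exact congrArg Prod.snd hsum
    obtain ⟨c, hc⟩ := (C.exact₂ _).1 hz₂
    exact ⟨(g, c), by simp [d₃_apply, hg, hc]⟩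
  · rintro ⟨z, rfl⟩
    have hβγ : T.β (F.d₃ z.1) + (0, C.δ₂ (T.γ z.1)) = 0 := by rw [T.δ₂_γ, add_neg_cancel]
    simpa [d₂_apply, d₃_apply, C.exact₂.apply_apply_eq_zero] using hβγ

lemma injective_d₃ : Function.Injective T.d₃ := by
  rw [injective_iff_map_eq_zero]
  rintro ⟨g, c⟩ h
  obtain ⟨hg, hc⟩ := Prod.mk_eq_zero.1 ((T.d₃_apply _).symm.trans h)
  obtain rfl : g = 0 := (injective_iff_map_eq_zero _).1 F.injective₃ _ hg
  obtain rfl : c = 0 := (injective_iff_map_eq_zero _).1 C.injective₃ _ (by simpa using hc)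
  rfl

lemma d₂_mul₁₁ (a b : E × K₁) :
    T.d₂ (T.mul₁₁ a b) = F.d₁ (C.π a) • b - F.d₁ (C.π b) • a := by
  rw [d₂_apply, mul₁₁_apply, T.δ₂_κ, add_sub_cancel]

lemma exists_mul₁₂ : ∃ m : E × K₁ →ₗ[R] M₂ × K₂ →ₗ[R] M₃ × K₃,
    ∀ a z, T.d₃ (m a z) = F.d₁ (C.π a) • z - T.mul₁₁ a (T.d₂ z) :=
  exists_bilinear_lift T.injective_d₃
    (LinearMap.lsmul R (M₂ × K₂) ∘ₗ F.d₁ ∘ₗ C.π - T.mul₁₁.compl₂ T.d₂) fun a z =>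
      (T.exact_d₃_d₂ _).1 (by
        simp [T.d₂_mul₁₁, T.π_d₂, F.exact₁.apply_apply_eq_zero])

/-- The minimal DG resolution of the trimmed ideal. -/
noncomputable def resolution : MinimalDGResolution R (E × K₁) (M₂ × K₂) (M₃ × K₃) where
  d₁ := F.d₁ ∘ₗ C.π
  d₂ := T.d₂
  d₃ := T.d₃
  exact₁ := T.exact_d₂_d₁
  exact₂ := T.exact_d₃_d₂
  injective₃ := T.injective_d₃
  d₁_mem _ := F.d₁_mem _
  d₂_mem z := add_mem (T.β_mem _) (prodMk_mem_smul_top (zero_mem _) (C.δ₂_mem _))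
  d₃_mem z := prodMk_mem_smul_top (F.d₃_mem _) (add_mem (T.γ_mem _) (C.δ₃_mem _))
  mul₁₁ := T.mul₁₁
  mul₁₂ := T.exists_mul₁₂.choose
  d₂_mul₁₁ := T.d₂_mul₁₁
  mul₁₁_self a := by rw [mul₁₁_apply, F.mul₁₁_self, T.κ_self]; rfl
  d₃_mul₁₂ := T.exists_mul₁₂.choose_spec

lemma resolution_mul₁₁ (a b : E × K₁) :
    T.resolution.mul₁₁ a b = (F.mul₁₁ (C.π a) (C.π b), T.κ a b) := T.mul₁₁_apply a b

lemma resolution_mul₁₂_fst (a : E × K₁) (z : M₂ × K₂) :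
    (T.resolution.mul₁₂ a z).1 = F.mul₁₂ (C.π a) z.1 := by
  apply F.injective₃
  have h : F.d₃ (T.resolution.mul₁₂ a z).1 = F.d₁ (C.π a) • z.1 - (T.mul₁₁ a (T.d₂ z)).1 :=
    congrArg Prod.fst (T.resolution.d₃_mul₁₂ a z)
  rw [h, mul₁₁_apply, π_d₂, F.d₃_mul₁₂]

lemma δ₃_resolution_mul₁₂_snd (a : E × K₁) (z : M₂ × K₂) :
    C.δ₃ (T.resolution.mul₁₂ a z).2 = F.d₁ (C.π a) • z.2 - T.κ a (T.d₂ z) -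
      T.γ (F.mul₁₂ (C.π a) z.1) := by
  have h : T.γ (T.resolution.mul₁₂ a z).1 + C.δ₃ (T.resolution.mul₁₂ a z).2 =
      F.d₁ (C.π a) • z.2 - (T.mul₁₁ a (T.d₂ z)).2 :=
    congrArg Prod.snd (T.resolution.d₃_mul₁₂ a z)
  rw [mul₁₁_apply, resolution_mul₁₂_fst] at h
  exact eq_sub_of_add_eq' h

variable (F C) in
lemma mul₁₁_π_inr_mem (a : E × K₁) (k : K₁) :
    F.mul₁₁ (C.π a) (C.π (0, k)) ∈ 𝔪 • (⊤ : Submodule R M₂) :=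
  map_mem_smul_top 𝔪 (F.mul₁₁ (C.π a)) (C.π_inr_mem k)

section QuadraticGenerators

variable (hd₁ : ∀ v, F.d₁ v ∈ maximalIdeal R ^ 2)
include hd₁

lemma κ_mem {a b : E × K₁} (hab : F.mul₁₁ (C.π a) (C.π b) ∈ 𝔪 • (⊤ : Submodule R M₂)) :
    T.κ a b ∈ 𝔪 • (⊤ : Submodule R K₂) := by
  apply C.δ₂_reflects
  have hmem : (0, C.δ₂ (T.κ a b)) ∈ 𝔪 ^ 2 • (⊤ : Submodule R (E × K₁)) :=
    T.δ₂_κ a b ▸ sub_mem (sub_mem (Submodule.smul_mem_smul (hd₁ _) trivial)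
      (Submodule.smul_mem_smul (hd₁ _) trivial)) (T.β_mem_sq hab)
  exact map_mem_smul_top _ (LinearMap.snd R E K₁) hmem

lemma resolution_mul₁₁_mem {a b : E × K₁}
    (hab : F.mul₁₁ (C.π a) (C.π b) ∈ 𝔪 • (⊤ : Submodule R M₂)) :
    T.resolution.mul₁₁ a b ∈ 𝔪 • (⊤ : Submodule R (M₂ × K₂)) := by
  rw [resolution_mul₁₁]
  exact prodMk_mem_smul_top hab (T.κ_mem hd₁ hab)

lemma κ_inr_mem_sq (a : E × K₁) {k : K₁} (hk : k ∈ 𝔪 • (⊤ : Submodule R K₁)) :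
    T.κ a (0, k) ∈ 𝔪 ^ 2 • (⊤ : Submodule R K₂) :=
  pow_two 𝔪 ▸ map_mem_mul_smul_top (f := T.κ a ∘ₗ LinearMap.inr R E K₁)
    (fun k => T.κ_mem hd₁ (mul₁₁_π_inr_mem F C a k)) hk

lemma κ_d₂_mem_sq (a : E × K₁) (z : M₂ × K₂) :
    T.κ a (T.d₂ z) ∈ 𝔪 ^ 2 • (⊤ : Submodule R K₂) := by
  have hsplit : T.d₂ z = ((T.β z.1).1, 0) + (0, (T.β z.1).2 + C.δ₂ z.2) := by
    simp [d₂_apply, Prod.ext_iff]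
  rw [hsplit, map_add]
  exact add_mem (map_mem_smul_top _ (T.κ a ∘ₗ LinearMap.inl R E K₁) (T.β_fst_mem _))
    (T.κ_inr_mem_sq hd₁ a (add_mem (T.β_snd_mem _) (C.δ₂_mem _)))

lemma resolution_mul₁₂_mem {a : E × K₁} {z : M₂ × K₂}
    (haz : F.mul₁₂ (C.π a) z.1 ∈ 𝔪 • (⊤ : Submodule R M₃)) :
    T.resolution.mul₁₂ a z ∈ 𝔪 • (⊤ : Submodule R (M₃ × K₃)) := by
  have hfst : (T.resolution.mul₁₂ a z).1 ∈ 𝔪 • (⊤ : Submodule R M₃) := by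
    rwa [resolution_mul₁₂_fst]
  have hsnd : (T.resolution.mul₁₂ a z).2 ∈ 𝔪 • (⊤ : Submodule R K₃) := by
    apply C.δ₃_reflects
    rw [δ₃_resolution_mul₁₂_snd]
    exact sub_mem (sub_mem (Submodule.smul_mem_smul (hd₁ _) trivial) (T.κ_d₂_mem_sq hd₁ a z))
      (pow_two 𝔪 ▸ map_mem_mul_smul_top T.γ_mem haz)
  exact prodMk_mem_smul_top hfst hsnd

end QuadraticGenerators

section StandardForm

variable {ι₁ ι₂ ι₃ κ₁ κ₂ κ₃ P Q : Type*} {b₁ : Basis ι₁ R M₁} {b₂ : Basis ι₂ R M₂}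
  {b₃ : Basis ι₃ R M₃} {u : Option P ↪ ι₁} {v : P ⊕ Q ↪ ι₂} {w : Q ↪ ι₃} {σ : Set ι₁}

/-- The distinguished degree-one indices outside `σ`: the pivot, and the `u (some k)` that are not
trimmed away. -/
def untrimmedEmb (u : Option P ↪ ι₁) (hσ : u none ∉ σ) :
    Option {k // u (some k) ∉ σ} ↪ (σᶜ : Set ι₁) where
  toFun o := ⟨u (o.map Subtype.val), by
    rcases o with _ | k
    exacts [hσ, k.2]⟩
  inj' _ _ h := Option.map_injective Subtype.val_injective (u.injective (congrArg Subtype.val h))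

lemma mul₁₁_prod_mem (hd₁ : ∀ v, F.d₁ v ∈ 𝔪 ^ 2) (hF : F.IsStandardH b₁ b₂ b₃ u v w)
    (hσ : u none ∉ σ) {bE : Basis (σᶜ : Set ι₁) R E} (hbE : ∀ i, C.π (bE i, 0) = b₁ i)
    (bK₁ : Basis κ₁ R K₁) {a b : (σᶜ : Set ι₁) ⊕ κ₁}
    (hab : ¬(a = .inl (untrimmedEmb u hσ none) ∧ ∃ k, b = .inl (untrimmedEmb u hσ (some k))))
    (hba : ¬(b = .inl (untrimmedEmb u hσ none) ∧ ∃ k, a = .inl (untrimmedEmb u hσ (some k)))) :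
    T.resolution.mul₁₁ (bE.prod bK₁ a) (bE.prod bK₁ b) ∈ 𝔪 • (⊤ : Submodule R (M₂ × K₂)) := by
  rcases b with i' | k
  · rcases a with i | k
    · refine T.resolution_mul₁₁_mem hd₁ ?_
      simp only [Basis.prod_apply, Sum.elim_inl, Function.comp_apply, LinearMap.inl_apply, hbE]
      refine hF.mul₁₁_other _ _ ?_ ?_
      · rintro ⟨hi, k, hi'⟩
        exact hab ⟨congrArg Sum.inl (Subtype.ext hi), ⟨k, hi' ▸ i'.2⟩,
          congrArg Sum.inl (Subtype.ext hi')⟩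
      · rintro ⟨hi', k, hi⟩
        exact hba ⟨congrArg Sum.inl (Subtype.ext hi'), ⟨k, hi ▸ i.2⟩,
          congrArg Sum.inl (Subtype.ext hi)⟩
    · rw [MinimalDGResolution.mul₁₁_skew, neg_mem_iff]
      simpa [Basis.prod_apply] using T.resolution_mul₁₁_mem hd₁ (mul₁₁_π_inr_mem F C _ _)
  · simpa [Basis.prod_apply] using T.resolution_mul₁₁_mem hd₁ (mul₁₁_π_inr_mem F C _ _)

lemma mul₁₂_prod_mem (hd₁ : ∀ v, F.d₁ v ∈ 𝔪 ^ 2) (hF : F.IsStandardH b₁ b₂ b₃ u v w)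
    (hσ : u none ∉ σ) {bE : Basis (σᶜ : Set ι₁) R E} (hbE : ∀ i, C.π (bE i, 0) = b₁ i)
    (bK₁ : Basis κ₁ R K₁) (bK₂ : Basis κ₂ R K₂) (θ : M₂ →ₗ[R] K₂) {a : (σᶜ : Set ι₁) ⊕ κ₁}
    {c : ι₂ ⊕ κ₂} (hac : ¬(a = .inl (untrimmedEmb u hσ none) ∧ ∃ j, c = .inl (v (.inr j)))) :
    T.resolution.mul₁₂ (bE.prod bK₁ a) (shearedBasis b₂ bK₂ θ c) ∈
      𝔪 • (⊤ : Submodule R (M₃ × K₃)) := by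
  apply T.resolution_mul₁₂_mem hd₁
  rcases c with i | k
  · rw [shearedBasis_inl]
    rcases a with i' | k
    · simp only [Basis.prod_apply, Sum.elim_inl, Function.comp_apply, LinearMap.inl_apply, hbE]
      refine hF.mul₁₂_other _ _ ?_
      rintro ⟨hi', j, hi⟩
      exact hac ⟨congrArg Sum.inl (Subtype.ext hi'), j, congrArg Sum.inl hi⟩
    · simpa [Basis.prod_apply] using map_mem_smul_top 𝔪 (F.mul₁₂.flip (b₂ i)) (C.π_inr_mem (bK₁ k))
  · rw [shearedBasis_inr, map_zero]
    exact zero_mem _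

theorem exists_isStandardH_resolution (hd₁ : ∀ v, F.d₁ v ∈ 𝔪 ^ 2)
    (hF : F.IsStandardH b₁ b₂ b₃ u v w) (hσ : u none ∉ σ) {bE : Basis (σᶜ : Set ι₁) R E}
    (hbE : ∀ i, C.π (bE i, 0) = b₁ i) (bK₁ : Basis κ₁ R K₁) (bK₂ : Basis κ₂ R K₂)
    (bK₃ : Basis κ₃ R K₃) :
    ∃ (B₂ : Basis (ι₂ ⊕ κ₂) R (M₂ × K₂)) (B₃ : Basis (ι₃ ⊕ κ₃) R (M₃ × K₃)),
      T.resolution.IsStandardH (bE.prod bK₁) B₂ B₃ ((untrimmedEmb u hσ).trans .inl)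
        (((Function.Embedding.subtype _).sumMap (.refl Q)).trans (v.trans .inl))
        (w.trans .inl) := by
  let e := bE (untrimmedEmb u hσ none)
  obtain ⟨θ₂, hθ₂⟩ := exists_linearMap_basis_eq b₂
    (((Function.Embedding.subtype _).trans .inl).trans v) fun k : {k // u (some k) ∉ σ} =>
      T.κ (e, 0) (bE (untrimmedEmb u hσ (some k)), 0)
  obtain ⟨θ₃, hθ₃⟩ := exists_linearMap_basis_eq b₃ w fun j =>
    (T.resolution.mul₁₂ (e, 0) (b₂ (v (.inr j)), θ₂ (b₂ (v (.inr j))))).2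
  refine ⟨shearedBasis b₂ bK₂ θ₂, shearedBasis b₃ bK₃ θ₃, fun k => ?_,
    fun a b => T.mul₁₁_prod_mem hd₁ hF hσ hbE bK₁, fun j => ?_,
    fun a c => T.mul₁₂_prod_mem hd₁ hF hσ hbE bK₁ bK₂ θ₂⟩
  · have hdiff : T.resolution.mul₁₁ (e, 0) (bE (untrimmedEmb u hσ (some k)), 0) -
        (b₂ (v (.inl k)), θ₂ (b₂ (v (.inl k)))) =
          (F.mul₁₁ (b₁ (u none)) (b₁ (u (some k))) - b₂ (v (.inl k)), 0) := by
      rw [resolution_mul₁₁, hbE, hbE, Prod.mk_sub_mk]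
      exact Prod.ext rfl (sub_eq_zero.2 (hθ₂ k).symm)
    simpa [Basis.prod_apply, shearedBasis_inl, e, hdiff] using
      prodMk_mem_smul_top (hF.mul₁₁_pivot k) (zero_mem _)
  · have hdiff : T.resolution.mul₁₂ (e, 0) (b₂ (v (.inr j)), θ₂ (b₂ (v (.inr j)))) -
        (b₃ (w j), θ₃ (b₃ (w j))) =
          (F.mul₁₂ (b₁ (u none)) (b₂ (v (.inr j))) - b₃ (w j), 0) := by
      ext1
      · rw [Prod.fst_sub, resolution_mul₁₂_fst, hbE]
        rfl
      · rw [Prod.snd_sub, hθ₃, sub_self]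
    simpa [Basis.prod_apply, shearedBasis_inl, e, hdiff] using
      prodMk_mem_smul_top (hF.mul₁₂_pivot j) (zero_mem _)

end StandardForm

end TrimLift

section KoszulCover

variable {ι : Type*} [Finite ι] {x : Fin 3 → R}

/-- One Koszul complex on `x` for each index in `σ`. -/
noncomputable def koszulCover (hreg : RingTheory.Sequence.IsWeaklyRegular R [x 0, x 1, x 2])
    (hx : Ideal.span (Set.range x) = maximalIdeal R) (σ : Set ι) :
    LinearCover R ((σᶜ : Set ι) → R) (σ → Fin 3 → R) (σ → Fin 3 → R) (σ → R) (ι → R) where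
  π := trimMap x σ
  δ₂ := (crossProduct x).compLeft σ
  δ₃ := (LinearMap.toSpanSingleton R _ x).compLeft σ
  exact₁ := exact_koszul_trimMap hreg
  exact₂ := exact_compLeft (exact_toSpanSingleton_crossProduct hreg) σ
  injective₃ := (toSpanSingleton_injective hreg).comp_left
  π_inr_mem k := by
    rw [← hx, mem_smul_top_pi_iff]
    intro i
    by_cases hi : i ∈ σ
    · exact mem_smul_top_self_iff.2 ((mem_range_trimMap_iff x _).1 ⟨(0, k), rfl⟩ i hi)
    · rw [trimMap_apply_of_notMem x hi]
      exact zero_mem _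
  δ₂_mem k := hx ▸ mem_smul_top_pi_iff.2 fun j => crossProduct_mem_smul_top x (k j)
  δ₃_mem k := hx ▸ mem_smul_top_pi_iff.2 fun j =>
    Submodule.smul_mem _ (k j) (mem_smul_top_span_range x)
  δ₂_reflects k hk := by
    rw [← hx, mem_smul_top_pi_iff] at hk ⊢
    exact fun j => mem_smul_top_of_crossProduct_mem_sq hreg (hk j)
  δ₃_reflects k hk := by
    rw [← hx, mem_smul_top_pi_iff] at hk ⊢
    exact fun j => mem_smul_top_self_iff.2 (mem_of_smul_mem_sq hreg (hk j))
  exists_lift v hv := by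
    rw [← hx] at hv ⊢
    exact exists_trimMap_eq_of_mem_sq hv

end KoszulCover

lemma MinimalDGResolution.d₁_mem_sq {ι M₂ M₃ : Type*} [Finite ι] [Nontrivial ι]
    [AddCommGroup M₂] [Module R M₂] [AddCommGroup M₃] [Module R M₃]
    (F : MinimalDGResolution R (ι → R) M₂ M₃)
    (hquad : ∀ v, F.d₂ v ∈ 𝔪 ^ 2 • (⊤ : Submodule R (ι → R))) (v : ι → R) : F.d₁ v ∈ 𝔪 ^ 2 := by
  classical
  refine linearMap_mem_of_forall_single fun i => Ideal.mul_mem_left _ _ ?_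
  obtain ⟨j, hji⟩ := exists_ne i
  have hmul := mem_smul_top_pi_iff.1 (hquad (F.mul₁₁ (Pi.single i 1) (Pi.single j 1))) j
  simpa [F.d₂_mul₁₁, hji] using hmul

theorem trim_quadratic_torclass_H_general {R : Type} [CommRing R] [IsLocalRing R] {x : Fin 3 → R}
    (hreg : RingTheory.Sequence.IsWeaklyRegular R [x 0, x 1, x 2])
    (hx : Ideal.span (Set.range x) = maximalIdeal R) {p q n₁ n₂ n₃ : ℕ} {hp : p < n₁}
    {hpq : p + q ≤ n₂} {hq : q ≤ n₃}
    {F : MinimalDGResolution R (Fin n₁ → R) (Fin n₂ → R) (Fin n₃ → R)}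
    (hF : F.IsStandardH (Pi.basisFun R _) (Pi.basisFun R _) (Pi.basisFun R _) (pivotEmb hp)
      (finSumFinEquiv.toEmbedding.trans (Fin.castLEEmb hpq)) (Fin.castLEEmb hq))
    (hquad : ∀ v, F.d₂ v ∈ maximalIdeal R ^ 2 • (⊤ : Submodule R (Fin n₁ → R)))
    {σ : Finset (Fin n₁)} (hσ : ⟨p, hp⟩ ∉ σ) :
    HasTorClassH R (trimIdeal R (fun i => F.d₁ (Pi.single i 1)) σ)
      (p - ((σ : Set (Fin n₁)) ∩ {i | (i : ℕ) < p}).ncard) q := by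
  rcases σ.eq_empty_or_nonempty with rfl | ⟨i, hi⟩
  · simpa [trimIdeal_empty] using hF.hasTorClassH
  · have : Nontrivial (Fin n₁) := nontrivial_of_ne _ _ (ne_of_mem_of_not_mem hi hσ)
    have hσ' : pivotEmb hp none ∉ (σ : Set (Fin n₁)) := by rwa [pivotEmb_none]
    obtain ⟨T⟩ := TrimLift.nonempty (C := koszulCover hreg hx (σ : Set (Fin n₁))) hquad
    obtain ⟨B₂, B₃, hB⟩ := T.exists_isStandardH_resolution (F.d₁_mem_sq hquad) hF hσ'
      (bE := Pi.basisFun R _) (trimMap_single x) (Pi.basis fun _ => Pi.basisFun R (Fin 3))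
      (Pi.basis fun _ => Pi.basisFun R (Fin 3)) (Pi.basisFun R _)
    have hclass := hB.hasTorClassH
    rw [card_pivotEmb_notMem, Nat.card_fin] at hclass
    rw [← range_comp_trimMap F.d₁ hx]
    exact hclass

end DGResolutions

/-!
STATEMENT 10 (Corollary 4.12): in the situation of Lemma 4.11 (regular local of
dimension 3, `R/I` of class `H(p,q)` with minimal DG-algebra resolution `F` in standard
form and `f₁ⁱ ·_F f₁ʲ ∈ 𝔪² F₂` for `i, j ≠ p+1`), assume moreover `d₂(F₂) ⊆ 𝔪² F₁`.
Then for every index set `σ` with `p+1 ∉ σ`, the trimmed ideal `tm_σ(I)` is either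
Golod or defines a ring of Tor-algebra class `H(p - |σ ∩ [p]|, q)`.
-/
theorem trim_quadratic_torclass_H
    {R : Type} [CommRing R] [IsNoetherianRing R] [IsLocalRing R]
    -- regular local of dimension 3
    (x : Fin 3 → R)
    (hreg : RingTheory.Sequence.IsRegular R [x 0, x 1, x 2])
    (hx : Ideal.span {x 0, x 1, x 2} = maximalIdeal R)
    (I : Ideal R) (p q : ℕ)
    (n1 n2 n3 : ℕ) (hp : p < n1) (hpq : p + q ≤ n2) (hq3 : q ≤ n3)
    (d1 : (Fin n1 → R) →ₗ[R] R) (d2 : (Fin n2 → R) →ₗ[R] (Fin n1 → R))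
    (d3 : (Fin n3 → R) →ₗ[R] (Fin n2 → R))
    -- minimal free resolution of `R/I`
    (hI : LinearMap.range d1 = I)
    (hex1 : LinearMap.ker d1 = LinearMap.range d2)
    (hex2 : LinearMap.ker d2 = LinearMap.range d3)
    (hex3 : LinearMap.ker d3 = ⊥)
    (hmin1 : ∀ v, d1 v ∈ maximalIdeal R)
    (hmin2 : ∀ v, d2 v ∈ maximalIdeal R • (⊤ : Submodule R (Fin n1 → R)))
    (hmin3 : ∀ v, d3 v ∈ maximalIdeal R • (⊤ : Submodule R (Fin n2 → R)))
    -- DG-algebra structure on `F`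
    (m11 : (Fin n1 → R) →ₗ[R] (Fin n1 → R) →ₗ[R] (Fin n2 → R))
    (m12 : (Fin n1 → R) →ₗ[R] (Fin n2 → R) →ₗ[R] (Fin n3 → R))
    (hleib1 : ∀ a b, d2 (m11 a b) = d1 a • b - d1 b • a)
    (halt : ∀ a, m11 a a = 0) (hskew : ∀ a b, m11 a b = - m11 b a)
    (hleib2 : ∀ a z, d3 (m12 a z) = d1 a • z - m11 a (d2 z))
    (hassoc : ∀ a b c, m12 c (m11 a b) = m12 a (m11 b c))
    -- `F` is in standard form of class `H(p,q)`
    (htabH1 : ∀ b : Fin n1, ∀ hb : (b : ℕ) < p,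
      m11 (Pi.single (⟨p, hp⟩ : Fin n1) 1) (Pi.single b 1) -
        Pi.single (⟨(b : ℕ), by omega⟩ : Fin n2) 1 ∈
      maximalIdeal R • (⊤ : Submodule R (Fin n2 → R)))
    (htabH2 : ∀ a b : Fin n1, ¬((a : ℕ) = p ∧ (b : ℕ) < p) → ¬((b : ℕ) = p ∧ (a : ℕ) < p) →
      m11 (Pi.single a 1) (Pi.single b 1) ∈
        maximalIdeal R • (⊤ : Submodule R (Fin n2 → R)))
    (htabH3 : ∀ b : Fin n2, ∀ hb1 : p ≤ (b : ℕ), ∀ hb2 : (b : ℕ) < p + q,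
      m12 (Pi.single (⟨p, hp⟩ : Fin n1) 1) (Pi.single b 1) -
        Pi.single (⟨(b : ℕ) - p, by omega⟩ : Fin n3) 1 ∈
      maximalIdeal R • (⊤ : Submodule R (Fin n3 → R)))
    (htabH4 : ∀ (a : Fin n1) (b : Fin n2), ¬((a : ℕ) = p ∧ p ≤ (b : ℕ) ∧ (b : ℕ) < p + q) →
      m12 (Pi.single a 1) (Pi.single b 1) ∈
        maximalIdeal R • (⊤ : Submodule R (Fin n3 → R)))
    -- `f₁ⁱ ·_F f₁ʲ ∈ 𝔪² F₂` for all `i, j ≠ p+1`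
    (hFF : ∀ a b : Fin n1, (a : ℕ) ≠ p → (b : ℕ) ≠ p →
      m11 (Pi.single a 1) (Pi.single b 1) ∈ (maximalIdeal R ^ 2) • (⊤ : Submodule R (Fin n2 → R)))
    -- `d₂(F₂) ⊆ 𝔪² F₁`
    (hquad : ∀ v, d2 v ∈ (maximalIdeal R ^ 2) • (⊤ : Submodule R (Fin n1 → R)))
    -- an index set not containing `p+1`
    (σ : Finset (Fin n1)) (hpnot : (⟨p, hp⟩ : Fin n1) ∉ σ) :
    IsGolodQuotient R (trimIdeal R (fun i => d1 (Pi.single i 1)) σ) ∨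
    HasTorClassH R (trimIdeal R (fun i => d1 (Pi.single i 1)) σ)
      (p - ((σ : Set (Fin n1)) ∩ {i | (i : ℕ) < p}).ncard) q := by
  let F : MinimalDGResolution R (Fin n1 → R) (Fin n2 → R) (Fin n3 → R) :=
    { d₁ := d1, d₂ := d2, d₃ := d3, mul₁₁ := m11, mul₁₂ := m12
      exact₁ := LinearMap.exact_iff.2 hex1
      exact₂ := LinearMap.exact_iff.2 hex2
      injective₃ := LinearMap.ker_eq_bot.1 hex3
      d₁_mem := hmin1, d₂_mem := hmin2, d₃_mem := hmin3
      d₂_mul₁₁ := hleib1, mul₁₁_self := halt, d₃_mul₁₂ := hleib2 }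
  have hF := (MinimalDGResolution.isStandardH_basisFun_iff hp hpq hq3 F).2
    ⟨htabH1, htabH2, htabH3, htabH4⟩
  have hrange : Set.range x = {x 0, x 1, x 2} := by
    ext y
    simp [Fin.exists_fin_succ, eq_comm]
  exact .inr
    (trim_quadratic_torclass_H_general hreg.toIsWeaklyRegular (hrange ▸ hx) hF hquad hpnot)
end
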